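/- Let S be a scheme and let D, D′ be closed subschemes of ℙ¹_S such that the composites D → S and D′ → S are étale covers of degree 3. Let η : D → D′ be an S-isomorphism. Then there exists a unique S-automorphism α of ℙ¹_S such that α restricted to D equals η, i.e., α ∘ ι_D = ι_{D′} ∘ η, where ι_D : D → ℙ¹_S and ι_{D′} : D′ → ℙ¹_S are the inclusions. -/

import Mathlib

universe u

open AlgebraicGeometry CategoryTheory CategoryTheory.Limits

attribute [local instance] MvPolynomial.gradedAlgebra

/-- The projective line over `ℤ`, i.e. `Proj ℤ[X₀, X₁]`. -/
noncomputable def P1Z : Scheme.{u} :=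
  AlgebraicGeometry.Proj (MvPolynomial.homogeneousSubmodule (Fin 2) (ULift.{u} ℤ))

/-- The projective line `ℙ¹_S` over a scheme `S`, i.e. the base change to `S` of
`Proj ℤ[X₀, X₁]` (the fibre product over the terminal scheme, which is `Spec ℤ`). -/
noncomputable def P1 (S : Scheme.{u}) : Scheme.{u} :=
  pullback (terminal.from S) (terminal.from P1Z)

/-- The structure morphism `ℙ¹_S ⟶ S`. -/
noncomputable def P1proj (S : Scheme.{u}) : P1 S ⟶ S :=
  pullback.fst (terminal.from S) (terminal.from P1Z)

/-- `f : D ⟶ S` is an étale cover of degree `n`: a finite étale surjection all of whose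
geometric fibres consist of `n` points. -/
def IsEtaleCoverOfDegree (n : ℕ) {D S : Scheme.{u}} (f : D ⟶ S) : Prop :=
  IsFinite f ∧ IsEtale f ∧ Function.Surjective f.base ∧
    ∀ (K : Type u) [Field K] [IsAlgClosed K]
      (x : Spec (CommRingCat.of K) ⟶ S), Nat.card (pullback f x : Scheme.{u}) = n


namespace P1Aux

/-- The grading on `ℤ[X₀, X₁]`. -/
noncomputable abbrev gr := MvPolynomial.homogeneousSubmodule (Fin 2) (ULift.{u} ℤ)

/-- Evaluation of integral polynomials. -/
noncomputable def evp {B : Type*} [CommRing B] (v : Fin 2 → B) :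
    MvPolynomial (Fin 2) (ULift.{u} ℤ) →+* B :=
  MvPolynomial.eval₂Hom ((Int.castRingHom B).comp ULift.ringEquiv.toRingHom) v

@[simp] lemma evp_X {B : Type*} [CommRing B] (v : Fin 2 → B) (i : Fin 2) :
    evp.{u} v (MvPolynomial.X i) = v i := by simp [evp]

lemma evp_comp {B C : Type*} [CommRing B] [CommRing C] (f : B →+* C) (v : Fin 2 → B) :
    f.comp (evp.{u} v) = evp (fun i => f (v i)) := by
  apply MvPolynomial.ringHom_ext
  · intro r
    simp [evp]
  · intro i
    simp

lemma hom_eq_evp {B : Type*} [CommRing B] (f : MvPolynomial (Fin 2) (ULift.{u} ℤ) →+* B) :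
    f = evp (fun i => f (MvPolynomial.X i)) := by
  apply MvPolynomial.ringHom_ext
  · intro r
    simp only [evp, MvPolynomial.coe_eval₂Hom, MvPolynomial.eval₂_C]
    have h1 : f (MvPolynomial.C r) = ((f.comp MvPolynomial.C).comp
        (ULift.ringEquiv (R := ℤ)).symm.toRingHom) r.down := rfl
    rw [h1]
    exact RingHom.congr_fun (RingHom.ext_int _ (Int.castRingHom B)) r.down
  · intro i
    simp

lemma evp_smul {B : Type*} [CommRing B] (c : B) (v : Fin 2 → B) {n : ℕ}
    {p : MvPolynomial (Fin 2) (ULift.{u} ℤ)} (hp : p ∈ gr.{u} n) :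
    evp (fun i => c * v i) p = c ^ n * evp v p := by
  have hp' : p.IsHomogeneous n := hp
  simp only [evp, MvPolynomial.coe_eval₂Hom, MvPolynomial.eval₂_eq, Finset.mul_sum]
  refine Finset.sum_congr rfl fun d hd => ?_
  have := hp' (MvPolynomial.mem_support_iff.mp hd)
  rw [Pi.one_def, ← Finsupp.degree_eq_weight_one, Finsupp.degree_apply] at this
  rw [← this]
  simp only [mul_pow, Finset.prod_mul_distrib, Finset.prod_pow_eq_pow_sum]
  ring

open HomogeneousLocalization

lemma X_mem (i : Fin 2) : (MvPolynomial.X i : MvPolynomial (Fin 2) (ULift.{u} ℤ)) ∈ gr.{u} 1 :=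
  MvPolynomial.isHomogeneous_X _ _

/-- Ring homs out of the degree zero localization -/
noncomputable def evA {B : Type*} [CommRing B] (f : MvPolynomial (Fin 2) (ULift.{u} ℤ))
    (v : Fin 2 → B) (h : IsUnit (evp.{u} v f)) : Away gr.{u} f →+* B :=
  (IsLocalization.Away.lift (S := Localization.Away f) f h).comp
    (algebraMap (Away gr.{u} f) (Localization.Away f))

lemma evA_mk {B : Type*} [CommRing B] {f : MvPolynomial (Fin 2) (ULift.{u} ℤ)} {d : ℕ}
    (hf : f ∈ gr.{u} d)
    (v : Fin 2 → B) (h : IsUnit (evp.{u} v f)) (n : ℕ) (p) (hp : p ∈ gr.{u} (n • d)) :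
    evA f v h (Away.mk gr.{u} hf n p hp) * evp v f ^ n = evp v p := by
  simp only [evA, RingHom.comp_apply, HomogeneousLocalization.algebraMap_apply, Away.val_mk]
  rw [← map_pow (evp v), ← IsLocalization.Away.lift_eq (S := Localization.Away f) f h (f ^ n),
    ← map_mul, Localization.mk_eq_mk', IsLocalization.mk'_spec_mk,
    IsLocalization.Away.lift_eq]

lemma hom_eq_evA {B : Type*} [CommRing B] (i : Fin 2)
    (φ : Away gr.{u} (MvPolynomial.X i) →+* B) :
    ∃ v : Fin 2 → B, v i = 1 ∧ ∃ h, φ = evA (MvPolynomial.X i) v h := by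
  let w : Fin 2 → Away gr.{u} (MvPolynomial.X i) := fun k =>
    Away.mk gr.{u} (X_mem i) 1 (MvPolynomial.X k) (X_mem k)
  have hw : w i = 1 := by
    apply HomogeneousLocalization.val_injective
    simp [w, Away.val_mk]
  have hone : IsUnit (evp.{u} (fun k => φ (w k)) (MvPolynomial.X i)) := by simp [hw]
  refine ⟨fun k => φ (w k), by simp [hw], hone, ?_⟩
  ext a
  obtain ⟨n, p, hp, rfl⟩ := Away.mk_surjective _ (X_mem i) a
  have h1 : Away.mk gr.{u} (X_mem i) n p hp = evp w p := by
    apply HomogeneousLocalization.val_injective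
    have h2 := congrArg (fun g => g p) (evp_comp.{u}
      (algebraMap (Away gr.{u} (MvPolynomial.X i)) (Localization.Away
        (MvPolynomial.X i : MvPolynomial (Fin 2) (ULift.{u} ℤ)))) w)
    simp only [RingHom.comp_apply, HomogeneousLocalization.algebraMap_apply] at h2
    rw [h2, Away.val_mk]
    have h3 := congrArg (fun g => g p) (hom_eq_evp.{u} (algebraMap
      (MvPolynomial (Fin 2) (ULift.{u} ℤ)) (Localization.Away
        (MvPolynomial.X i : MvPolynomial (Fin 2) (ULift.{u} ℤ)))))
    rw [Localization.mk_eq_mk', IsLocalization.mk'_eq_iff_eq_mul]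
    rw [h3]
    have h4 : ∀ k, algebraMap (MvPolynomial (Fin 2) (ULift.{u} ℤ)) (Localization.Away
        (MvPolynomial.X i : MvPolynomial (Fin 2) (ULift.{u} ℤ))) (MvPolynomial.X k) =
        algebraMap (MvPolynomial (Fin 2) (ULift.{u} ℤ)) (Localization.Away
        (MvPolynomial.X i : MvPolynomial (Fin 2) (ULift.{u} ℤ))) (MvPolynomial.X i) * (w k).val := by
      intro k
      simp only [w, Away.val_mk, Localization.mk_eq_mk', pow_one]
      rw [mul_comm, IsLocalization.mk'_spec_mk]
    rw [funext h4]
    rw [evp_smul _ _ (n := n) (by simpa using hp), mul_comm]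
    simp
  have h5 := evA_mk (X_mem i) _ hone n p hp
  simp only [evp_X, hw, map_one, one_pow, mul_one] at h5
  rw [h5, h1, ← RingHom.comp_apply, evp_comp]

end P1Aux

namespace P1Aux

open HomogeneousLocalization

/-- Proj of `ℤ[X₀, X₁]`. -/
noncomputable abbrev PZ : Scheme.{u} := Proj gr.{u}

/-- Pullback of a pair of functions. -/
noncomputable abbrev pb {V W : Scheme.{u}} (f : W ⟶ V) (v : Fin 2 → Γ(V, ⊤)) : Fin 2 → Γ(W, ⊤) :=
  fun i => f.appTop.hom (v i)

lemma isUnit_of_forall {V : Scheme.{u}} (s : Γ(V, ⊤)) (h : ∀ x : V, x ∈ V.basicOpen s) :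
    IsUnit s := by
  apply RingedSpace.isUnit_of_isUnit_germ V.toRingedSpace
  intro x hx
  exact (V.mem_basicOpen s x hx).mp (h x)

lemma toSpecΓ_comp_inj {V : Scheme.{u}} {A : CommRingCat.{u}} {φ ψ : A ⟶ Γ(V, ⊤)}
    (h : V.toSpecΓ ≫ Spec.map φ = V.toSpecΓ ≫ Spec.map ψ) : φ = ψ := by
  have h2 := congrArg Scheme.Hom.appTop h
  rw [Scheme.Hom.comp_appTop, Scheme.Hom.comp_appTop, Scheme.toSpecΓ_appTop,
    Scheme.ΓSpecIso_naturality, Scheme.ΓSpecIso_naturality] at h2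
  exact (Iso.cancel_iso_hom_left _ _ _).mp h2

lemma exists_toSpecΓ_comp {V : Scheme.{u}} {A : CommRingCat.{u}} (m : V ⟶ Spec A) :
    ∃ φ : A ⟶ Γ(V, ⊤), m = V.toSpecΓ ≫ Spec.map φ := by
  refine ⟨(Scheme.ΓSpecIso A).inv ≫ m.appTop, ?_⟩
  rw [Spec.map_comp, ← Scheme.toSpecΓ_naturality_assoc]
  simp

lemma evA_congr {B : Type*} [CommRing B] {f : MvPolynomial (Fin 2) (ULift.{u} ℤ)} {d : ℕ}
    (hf : f ∈ gr.{u} d) (v : Fin 2 → B) (h : IsUnit (evp.{u} v f)) (φ : Away gr.{u} f →+* B)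
    (H : ∀ n p hp, φ (Away.mk gr.{u} hf n p hp) * evp v f ^ n = evp v p) : φ = evA f v h := by
  ext a
  obtain ⟨n, p, hp, rfl⟩ := Away.mk_surjective _ hf a
  apply (h.pow n).mul_left_injective
  simp only
  rw [H, evA_mk]

/-- The point with homogeneous coordinates `v`. -/
noncomputable def pntF {V : Scheme.{u}} (f : MvPolynomial (Fin 2) (ULift.{u} ℤ)) {d : ℕ}
    (hd : 0 < d) (hf : f ∈ gr.{u} d) (v : Fin 2 → Γ(V, ⊤)) (h : IsUnit (evp.{u} v f)) : V ⟶ PZ.{u} :=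
  V.toSpecΓ ≫ Spec.map (CommRingCat.ofHom (evA f v h)) ≫ Proj.awayι gr.{u} f hf hd

lemma pntF_mul {V : Scheme.{u}} (f g k : MvPolynomial (Fin 2) (ULift.{u} ℤ)) {d e e' : ℕ}
    (hd : 0 < d) (hf : f ∈ gr.{u} d) (he : 0 < e') (hg : g ∈ gr.{u} e) (hfg : k ∈ gr.{u} e')
    (hk : k = f * g) (hh : e' = d + e)
    (v : Fin 2 → Γ(V, ⊤)) (h : IsUnit (evp.{u} v f)) (h' : IsUnit (evp.{u} v k)) :
    pntF f hd hf v h = pntF k he hfg v h' := by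
  subst hh
  have key : (evA k v h').comp (awayMap gr.{u} hg hk) = evA f v h := by
    apply evA_congr hf
    intro n p hp
    have := evA_mk (hk ▸ SetLike.mul_mem_graded hf hg) v h' n (p * g ^ n) (by
      rw [smul_add]; exact SetLike.mul_mem_graded hp (SetLike.pow_mem_graded n hg))
    rw [RingHom.comp_apply, awayMap_mk]
    have hu : IsUnit (evp.{u} v g) := by
      rw [hk, map_mul] at h'
      exact isUnit_of_mul_isUnit_right h'
    apply (hu.pow n).mul_left_injective
    simp only
    have e1 : evp.{u} v k = evp v f * evp v g := by rw [hk, map_mul]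
    have e2 : evp.{u} v (p * g ^ n) = evp v p * evp v g ^ n := by rw [map_mul, map_pow]
    rw [← e2, ← this, e1]
    ring
  have key2 := Proj.SpecMap_awayMap_awayι gr.{u} hf hd hg hk
  rw [pntF, pntF, ← key, CommRingCat.ofHom_comp, Spec.map_comp, Category.assoc]
  congr 2

/-- The point with homogeneous coordinates `v`, where `v i` is a unit. -/
noncomputable def pnt {V : Scheme.{u}} (i : Fin 2) (v : Fin 2 → Γ(V, ⊤)) (h : IsUnit (v i)) :
    V ⟶ PZ.{u} :=
  pntF (MvPolynomial.X i) one_pos (X_mem i) v (by simpa using h)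

lemma pnt_indep {V : Scheme.{u}} (i j : Fin 2) (v : Fin 2 → Γ(V, ⊤)) (h : IsUnit (v i))
    (h' : IsUnit (v j)) : pnt i v h = pnt j v h' := by
  have hu : IsUnit (evp.{u} v (MvPolynomial.X i * MvPolynomial.X j)) := by
    simpa using ⟨h, h'⟩
  have hm : (MvPolynomial.X i * MvPolynomial.X j : MvPolynomial (Fin 2) (ULift.{u} ℤ)) ∈
      gr.{u} 2 := SetLike.mul_mem_graded (X_mem i) (X_mem j)
  rw [pnt, pnt, pntF_mul (MvPolynomial.X i) (MvPolynomial.X j) _ one_pos (X_mem i) two_pos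
    (X_mem j) hm rfl rfl v _ hu, pntF_mul (MvPolynomial.X j) (MvPolynomial.X i) _ one_pos (X_mem j)
      two_pos (X_mem i) hm (mul_comm _ _) rfl v _ hu]

lemma pnt_nat {V W : Scheme.{u}} (f : W ⟶ V) (i : Fin 2) (v : Fin 2 → Γ(V, ⊤)) (h : IsUnit (v i)) :
    f ≫ pnt i v h = pnt i (pb f v) (h.map _) := by
  rw [pnt, pnt, pntF, pntF, Scheme.toSpecΓ_naturality_assoc, ← Spec.map_comp_assoc]
  congr 3
  ext1
  apply evA_congr (X_mem i)
  intro n p hp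
  have := congrArg f.appTop.hom (evA_mk (X_mem i) v (by simpa using h) n p hp)
  rw [map_mul, ← RingHom.comp_apply, ← RingHom.comp_apply, map_pow, ← RingHom.comp_apply,
    evp_comp] at this
  exact this

lemma pnt_smul {V : Scheme.{u}} (i : Fin 2) (v w : Fin 2 → Γ(V, ⊤)) (h : IsUnit (v i))
    (h' : IsUnit (w i)) (c : Γ(V, ⊤)) (hw : ∀ k, w k = c * v k) :
    pnt i v h = pnt i w h' := by
  have hw' : w = fun k => c * v k := funext hw
  subst hw'
  have hc : IsUnit c := isUnit_of_mul_isUnit_left h'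
  rw [pnt, pnt, pntF, pntF]
  congr 4
  apply evA_congr (X_mem i)
  intro n p hp
  have := evA_mk (X_mem i) v (by simpa using h) n p hp
  have e1 : evp.{u} (fun k => c * v k) (MvPolynomial.X i) = c * evp v (MvPolynomial.X i) := by
    simp
  rw [evp_smul _ _ hp, ← this, e1]
  simp only [smul_eq_mul, mul_one]
  ring

lemma pnt_range {V : Scheme.{u}} (i : Fin 2) (v : Fin 2 → Γ(V, ⊤)) (h : IsUnit (v i)) (x : V) :
    pnt i v h x ∈ Proj.basicOpen gr.{u} (MvPolynomial.X i) := by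
  rw [← Proj.opensRange_awayι gr.{u} (MvPolynomial.X i) (X_mem i) one_pos]
  exact ⟨_, rfl⟩

lemma pnt_range_iff {V : Scheme.{u}} (i j : Fin 2) (v : Fin 2 → Γ(V, ⊤)) (h : IsUnit (v i))
    (hj : ∀ x : V, pnt i v h x ∈ Proj.basicOpen gr.{u} (MvPolynomial.X j)) : IsUnit (v j) := by
  apply isUnit_of_forall
  intro x
  have hx : (V.toSpecΓ ≫ Spec.map (CommRingCat.ofHom (evA (MvPolynomial.X i) v
      (by simpa using h)))) x ∈
      (Proj.awayι gr.{u} (MvPolynomial.X i) (X_mem i) one_pos) ⁻¹ᵁ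
        (Proj.basicOpen gr.{u} (MvPolynomial.X j)) := hj x
  rw [Proj.awayι_preimage_basicOpen gr.{u} (X_mem i) one_pos (X_mem j) one_pos] at hx
  have hx2 : x ∈ V.toSpecΓ ⁻¹ᵁ (PrimeSpectrum.basicOpen (evA (MvPolynomial.X i) v
      (by simpa using h) (Away.isLocalizationElem (X_mem i) (X_mem j)))) := hx
  rw [Scheme.toSpecΓ_preimage_basicOpen] at hx2
  have := evA_mk (X_mem i) v (by simpa using h) 1 (MvPolynomial.X j ^ 1) (by
    simpa using X_mem j)
  have e1 : evp.{u} v (MvPolynomial.X j ^ 1) = v j := by simp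
  have e2 : evp.{u} v (MvPolynomial.X i) ^ 1 = v i := by simp
  rw [e1, e2] at this
  rw [← this, Scheme.basicOpen_mul]
  refine ⟨?_, ?_⟩
  · exact hx2
  · rw [Scheme.basicOpen_of_isUnit _ h]
    trivial

lemma pnt_inj {V : Scheme.{u}} (i j : Fin 2) (v w : Fin 2 → Γ(V, ⊤)) (h : IsUnit (v i))
    (h' : IsUnit (w j)) (H : pnt i v h = pnt j w h') :
    ∃ c, IsUnit c ∧ ∀ k, w k = c * v k := by
  have hwi : IsUnit (w i) := pnt_range_iff j i w h' (fun x => by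
    rw [← H]; exact pnt_range i v h x)
  rw [pnt_indep j i w h' hwi, pnt, pnt, pntF, pntF, ← Category.assoc, ← Category.assoc,
    cancel_mono] at H
  have H2 := toSpecΓ_comp_inj H
  have H3 : evA.{u} (MvPolynomial.X i) v (by simpa using h) =
    evA.{u} (MvPolynomial.X i) w (by simpa using hwi) := congrArg CommRingCat.Hom.hom H2
  obtain ⟨a, ha⟩ := h
  refine ⟨w i * ↑a⁻¹, hwi.mul (Units.isUnit _), fun k => ?_⟩
  have e1 := evA_mk (X_mem i) v (by simp [← ha]) 1 (MvPolynomial.X k) (X_mem k)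
  have e2 := evA_mk (X_mem i) w (by simpa using hwi) 1 (MvPolynomial.X k) (X_mem k)
  simp only [pow_one, evp_X] at e1 e2
  rw [← H3] at e2
  rw [← e2, ← e1]
  have : (↑a⁻¹ : Γ(V, ⊤)) * v i = 1 := by rw [← ha]; simp
  generalize evA.{u} (MvPolynomial.X i) v _ _ = z
  linear_combination (-(w i) * z) * this

lemma exists_pnt {V : Scheme.{u}} (m : V ⟶ PZ.{u}) (i : Fin 2)
    (hm : ∀ x, m x ∈ Proj.basicOpen gr.{u} (MvPolynomial.X i)) :
    ∃ v : Fin 2 → Γ(V, ⊤), v i = 1 ∧ ∃ h, m = pnt i v h := by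
  let j := Proj.awayι gr.{u} (MvPolynomial.X i) (X_mem i) one_pos
  have hr : Set.range m ⊆ Set.range j := by
    rintro _ ⟨x, rfl⟩
    have := hm x
    rw [← Proj.opensRange_awayι gr.{u} (MvPolynomial.X i) (X_mem i) one_pos] at this
    exact this
  obtain ⟨φ, hφ⟩ := exists_toSpecΓ_comp (IsOpenImmersion.lift j m hr)
  obtain ⟨v, hv, h, hh⟩ := hom_eq_evA i φ.hom
  refine ⟨v, hv, by simp [hv], ?_⟩
  rw [← IsOpenImmersion.lift_fac j m hr, hφ, pnt, pntF, ← hh]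
  simp only [Category.assoc]
  rfl

lemma exists_mem_basicOpen (x : PZ.{u}) :
    ∃ i, x ∈ Proj.basicOpen gr.{u} (MvPolynomial.X i) := by
  have h := Proj.iSup_basicOpen_eq_top' gr.{u} (ι := Fin 2) (fun i => MvPolynomial.X i)
    (fun i => ⟨1, X_mem i⟩) (by
      rw [eq_top_iff]
      rintro p -
      induction p using MvPolynomial.induction_on with
      | C a =>
        exact Subalgebra.algebraMap_mem _ (⟨MvPolynomial.C a, MvPolynomial.isHomogeneous_C _ _⟩ :
          gr.{u} 0)
      | add p q hp hq => exact add_mem hp hq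
      | mul_X p i hp => exact mul_mem hp (Algebra.subset_adjoin ⟨i, rfl⟩))
  have : x ∈ (⊤ : (Proj gr.{u}).Opens) := trivial
  rw [← h] at this
  exact TopologicalSpace.Opens.mem_iSup.mp this

/-- `m` has homogeneous coordinates `v`, one of which is a unit. -/
def RepP {V : Scheme.{u}} (m : V ⟶ PZ.{u}) (v : Fin 2 → Γ(V, ⊤)) : Prop :=
  ∃ i h, m = pnt i v h

lemma RepP.pb {V W : Scheme.{u}} {m : V ⟶ PZ.{u}} {v : Fin 2 → Γ(V, ⊤)} (h : RepP m v)
    (f : W ⟶ V) : RepP (f ≫ m) (pb f v) := by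
  obtain ⟨i, h, rfl⟩ := h
  exact ⟨i, _, pnt_nat f i v h⟩

lemma RepP.unique {V : Scheme.{u}} {m m' : V ⟶ PZ.{u}} {v w : Fin 2 → Γ(V, ⊤)} (h : RepP m v)
    (h' : RepP m' w) (c : Γ(V, ⊤)) (hc : IsUnit c) (hw : ∀ k, w k = c * v k) : m = m' := by
  obtain ⟨i, h, rfl⟩ := h
  obtain ⟨j, h', rfl⟩ := h'
  have : IsUnit (w i) := by rw [hw]; exact hc.mul h
  rw [pnt_indep j i w h' this]
  exact pnt_smul i v w h this c hw

lemma RepP.inj {V : Scheme.{u}} {m : V ⟶ PZ.{u}} {v w : Fin 2 → Γ(V, ⊤)} (h : RepP m v)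
    (h' : RepP m w) : ∃ c, IsUnit c ∧ ∀ k, w k = c * v k := by
  obtain ⟨i, h, rfl⟩ := h
  obtain ⟨j, h', e⟩ := h'
  exact pnt_inj i j v w h h' e

lemma RepP.exists_isUnit {V : Scheme.{u}} {m : V ⟶ PZ.{u}} {v : Fin 2 → Γ(V, ⊤)} (h : RepP m v) :
    ∃ i, IsUnit (v i) := by
  obtain ⟨i, h, rfl⟩ := h
  exact ⟨i, h⟩

lemma exists_repP {V : Scheme.{u}} (v : Fin 2 → Γ(V, ⊤)) (h : ∃ i, IsUnit (v i)) :
    ∃ m, RepP m v := by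
  obtain ⟨i, h⟩ := h
  exact ⟨_, i, h, rfl⟩

lemma RepP.smul {V : Scheme.{u}} {m : V ⟶ PZ.{u}} {v w : Fin 2 → Γ(V, ⊤)} (h : RepP m v)
    (c : Γ(V, ⊤)) (hc : IsUnit c) (hw : ∀ k, w k = c * v k) : RepP m w := by
  obtain ⟨i, hi⟩ := h.exists_isUnit
  obtain ⟨m', hm'⟩ := exists_repP w ⟨i, by rw [hw]; exact hc.mul hi⟩
  rwa [h.unique hm' c hc hw]

lemma repP_local {V : Scheme.{u}} (m : V ⟶ PZ.{u}) (x : V) :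
    ∃ U : V.Opens, x ∈ U ∧ ∃ v, RepP (U.ι ≫ m) v := by
  obtain ⟨i, hi⟩ := exists_mem_basicOpen (m x)
  refine ⟨m ⁻¹ᵁ (Proj.basicOpen gr.{u} (MvPolynomial.X i)), hi, ?_⟩
  obtain ⟨v, -, h, e⟩ := exists_pnt ((m ⁻¹ᵁ (Proj.basicOpen gr.{u} (MvPolynomial.X i))).ι ≫ m) i
    (fun y => y.2)
  exact ⟨v, i, h, e⟩



/-- `m` has homogeneous coordinates `v`, one of which is a unit. -/
def Rep {V : Scheme.{u}} (m : V ⟶ P1Z.{u}) (v : Fin 2 → Γ(V, ⊤)) : Prop := RepP m v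

lemma Rep.pb {V W : Scheme.{u}} {m : V ⟶ P1Z.{u}} {v : Fin 2 → Γ(V, ⊤)} (h : Rep m v)
    (f : W ⟶ V) : Rep (f ≫ m) (pb f v) := RepP.pb h f

lemma Rep.unique {V : Scheme.{u}} {m m' : V ⟶ P1Z.{u}} {v w : Fin 2 → Γ(V, ⊤)} (h : Rep m v)
    (h' : Rep m' w) (c : Γ(V, ⊤)) (hc : IsUnit c) (hw : ∀ k, w k = c * v k) : m = m' :=
  RepP.unique h h' c hc hw

lemma Rep.inj {V : Scheme.{u}} {m : V ⟶ P1Z.{u}} {v w : Fin 2 → Γ(V, ⊤)} (h : Rep m v)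
    (h' : Rep m w) : ∃ c, IsUnit c ∧ ∀ k, w k = c * v k := RepP.inj h h'

lemma Rep.exists_isUnit {V : Scheme.{u}} {m : V ⟶ P1Z.{u}} {v : Fin 2 → Γ(V, ⊤)} (h : Rep m v) :
    ∃ i, IsUnit (v i) := RepP.exists_isUnit h

lemma exists_rep {V : Scheme.{u}} (v : Fin 2 → Γ(V, ⊤)) (h : ∃ i, IsUnit (v i)) :
    ∃ m : V ⟶ P1Z.{u}, Rep m v := exists_repP v h

lemma Rep.smul {V : Scheme.{u}} {m : V ⟶ P1Z.{u}} {v w : Fin 2 → Γ(V, ⊤)} (h : Rep m v)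
    (c : Γ(V, ⊤)) (hc : IsUnit c) (hw : ∀ k, w k = c * v k) : Rep m w := RepP.smul h c hc hw

lemma rep_local {V : Scheme.{u}} (m : V ⟶ P1Z.{u}) (x : V) :
    ∃ U : V.Opens, x ∈ U ∧ ∃ v, Rep (U.ι ≫ m) v := repP_local m x

/-- The standard affine opens. -/
noncomputable def stdOpen (i : Fin 2) : (P1Z.{u}).Opens :=
  (Proj.basicOpen gr.{u} (MvPolynomial.X i) : (PZ.{u}).Opens)

lemma exists_rep_of_mem {V : Scheme.{u}} (m : V ⟶ P1Z.{u}) (i : Fin 2)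
    (hm : ∀ x, m x ∈ stdOpen i) : ∃ v, v i = 1 ∧ Rep m v := by
  obtain ⟨v, h, h', e⟩ := exists_pnt m i hm
  exact ⟨v, h, i, h', e⟩

lemma Rep.isUnit_iff {V : Scheme.{u}} {m : V ⟶ P1Z.{u}} {v : Fin 2 → Γ(V, ⊤)} (h : Rep m v)
    (j : Fin 2) : IsUnit (v j) ↔ ∀ x, m x ∈ stdOpen j := by
  obtain ⟨i, hi, e⟩ := h
  subst e
  constructor
  · intro hj x
    have := pnt_range j v hj x
    rw [pnt_indep j i v hj hi] at this
    exact this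
  · intro hj
    exact pnt_range_iff i j v hi hj

end P1Aux

namespace P1Aux

/-- Flat and locally of finite presentation. -/
def Fp {X Y : Scheme.{u}} (f : X ⟶ Y) : Prop := Flat f ∧ LocallyOfFinitePresentation f

lemma Fp.of_etale {X Y : Scheme.{u}} (f : X ⟶ Y) [Etale f] : Fp f :=
  ⟨inferInstance, inferInstance⟩

lemma Fp.comp {X Y Z : Scheme.{u}} {f : X ⟶ Y} {g : Y ⟶ Z} (hf : Fp f) (hg : Fp g) :
    Fp (f ≫ g) := by
  obtain ⟨_, _⟩ := hf
  obtain ⟨_, _⟩ := hg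
  exact ⟨inferInstance, inferInstance⟩

lemma Fp.of_open {X Y : Scheme.{u}} (f : X ⟶ Y) [IsOpenImmersion f] : Fp f :=
  ⟨inferInstance, inferInstance⟩

lemma Fp.id (X : Scheme.{u}) : Fp (𝟙 X) := ⟨inferInstance, inferInstance⟩

lemma Fp.pullback_snd {X Y Z : Scheme.{u}} {f : X ⟶ Z} (g : Y ⟶ Z) (hf : Fp f) :
    Fp (pullback.snd f g) := by
  obtain ⟨_, _⟩ := hf
  exact ⟨inferInstance, inferInstance⟩

lemma mem_fppf {X : Scheme.{u}} (R : Sieve X)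
    (h : ∀ x : X, ∃ (U : Scheme.{u}) (f : U ⟶ X), Fp f ∧ x ∈ Set.range f ∧ R f) :
    R ∈ Scheme.fppfTopology X := by
  choose U f h1 h2 h3 using h
  have h4 : Presieve.ofArrows U f ∈ Scheme.fppfPrecoverage X := by
    rw [Scheme.fppfPrecoverage, Scheme.ofArrows_mem_precoverage_iff]
    exact ⟨fun x => ⟨x, h2 x⟩, fun x => h1 x⟩
  refine GrothendieckTopology.superset_covering _ ?_ (Precoverage.generate_mem_toGrothendieck h4)
  rw [Sieve.generate_le_iff]
  rintro _ _ ⟨x⟩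
  exact h3 x

lemma sep {X Z : Scheme.{u}} (m m' : X ⟶ Z)
    (h : ∀ x : X, ∃ (U : Scheme.{u}) (f : U ⟶ X), Fp f ∧ x ∈ Set.range f ∧ f ≫ m = f ≫ m') :
    m = m' := by
  let R : Sieve X :=
    { arrows := fun _ f => f ≫ m = f ≫ m'
      downward_closed := fun {_ _ f} hf g => by
        simp only [Category.assoc] at hf ⊢; rw [hf] }
  have hR : R ∈ Scheme.fppfTopology X := mem_fppf R h
  have hs := GrothendieckTopology.Subcanonical.isSheaf_of_isRepresentable
    (J := Scheme.fppfTopology) (yoneda.obj Z) R hR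
  exact hs.isSeparatedFor.ext (t₁ := m) (t₂ := m') (fun Y f hf => hf)

lemma glue {X Z : Scheme.{u}} (P : ∀ {Y : Scheme.{u}}, (Y ⟶ X) → (Y ⟶ Z) → Prop)
    (pull : ∀ {Y Y' : Scheme.{u}} (g : Y' ⟶ Y) (f : Y ⟶ X) (m : Y ⟶ Z), P f m → P (g ≫ f) (g ≫ m))
    (uniq : ∀ {Y : Scheme.{u}} (f : Y ⟶ X) (m m' : Y ⟶ Z), P f m → P f m' → m = m')
    (loc : ∀ x : X, ∃ (U : Scheme.{u}) (f : U ⟶ X), Fp f ∧ x ∈ Set.range f ∧ ∃ m, P f m) :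
    ∃ m : X ⟶ Z, ∀ {Y : Scheme.{u}} (f : Y ⟶ X) (n : Y ⟶ Z), P f n → f ≫ m = n := by
  let R : Sieve X :=
    { arrows := fun _ f => ∃ m, P f m
      downward_closed := fun {_ _ f} ⟨m, hm⟩ g => ⟨g ≫ m, pull g f m hm⟩ }
  have hR : R ∈ Scheme.fppfTopology X := mem_fppf R loc
  have hs := GrothendieckTopology.Subcanonical.isSheaf_of_isRepresentable
    (J := Scheme.fppfTopology) (yoneda.obj Z) R hR
  let x : Presieve.FamilyOfElements (yoneda.obj Z) R.arrows := fun Y f hf => hf.choose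
  have hx : x.Compatible := by
    rw [Presieve.compatible_iff_sieveCompatible]
    intro Y Y' f g hf
    exact uniq (g ≫ f) _ _ (Exists.choose_spec (p := fun m => P (g ≫ f) m) _)
      (pull g f _ hf.choose_spec)
  obtain ⟨m, hm, -⟩ := hs x hx
  refine ⟨m, fun {Y} f n hn => ?_⟩
  exact (hm f ⟨n, hn⟩).trans (uniq f _ _ (Exists.choose_spec (p := fun m => P f m) _) hn)

/-- The second projection. -/
noncomputable def P1snd (T : Scheme.{u}) : P1 T ⟶ P1Z.{u} :=
  pullback.snd (terminal.from T) (terminal.from P1Z)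

/-- A point of `ℙ¹_T`. -/
noncomputable def pt {V T : Scheme.{u}} (t : V ⟶ T) (m : V ⟶ P1Z.{u}) : V ⟶ P1 T :=
  pullback.lift t m (Subsingleton.elim _ _)

@[simp]
lemma pt_proj {V T : Scheme.{u}} (t : V ⟶ T) (m : V ⟶ P1Z.{u}) : pt t m ≫ P1proj T = t :=
  pullback.lift_fst _ _ _

@[simp]
lemma pt_snd {V T : Scheme.{u}} (t : V ⟶ T) (m : V ⟶ P1Z.{u}) : pt t m ≫ P1snd T = m :=
  pullback.lift_snd _ _ _

lemma pt_proj_assoc {V T Z : Scheme.{u}} (t : V ⟶ T) (m : V ⟶ P1Z.{u}) (h : T ⟶ Z) :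
    pt t m ≫ P1proj T ≫ h = t ≫ h := by
  rw [← Category.assoc, pt_proj]

lemma pt_snd_assoc {V T Z : Scheme.{u}} (t : V ⟶ T) (m : V ⟶ P1Z.{u}) (h : P1Z ⟶ Z) :
    pt t m ≫ P1snd T ≫ h = m ≫ h := by
  rw [← Category.assoc, pt_snd]

lemma P1_ext {V T : Scheme.{u}} {a b : V ⟶ P1 T} (h1 : a ≫ P1proj T = b ≫ P1proj T)
    (h2 : a ≫ P1snd T = b ≫ P1snd T) : a = b := pullback.hom_ext h1 h2

lemma comp_pt {W V T : Scheme.{u}} (f : W ⟶ V) (t : V ⟶ T) (m : V ⟶ P1Z.{u}) :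
    f ≫ pt t m = pt (f ≫ t) (f ≫ m) := by
  apply P1_ext <;> simp only [Category.assoc, pt_proj, pt_snd]

lemma eq_pt {V T : Scheme.{u}} (a : V ⟶ P1 T) : a = pt (a ≫ P1proj T) (a ≫ P1snd T) := by
  apply P1_ext <;> simp only [Category.assoc, pt_proj, pt_snd]

end P1Aux

namespace P1Aux

/-- Pullback of a matrix of functions. -/
noncomputable abbrev mp {V W : Scheme.{u}} (f : W ⟶ V) (M : Matrix (Fin 2) (Fin 2) Γ(V, ⊤)) :
    Matrix (Fin 2) (Fin 2) Γ(W, ⊤) := M.map f.appTop.hom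

lemma mp_comp {V W X : Scheme.{u}} (g : X ⟶ W) (f : W ⟶ V) (M : Matrix (Fin 2) (Fin 2) Γ(V, ⊤)) :
    mp (g ≫ f) M = mp g (mp f M) := by
  ext i j
  simp only [mp, Matrix.map_apply, Scheme.Hom.comp_appTop, CommRingCat.hom_comp, RingHom.comp_apply]

lemma pb_comp {V W X : Scheme.{u}} (g : X ⟶ W) (f : W ⟶ V) (v : Fin 2 → Γ(V, ⊤)) :
    pb (g ≫ f) v = pb g (pb f v) := by
  ext i
  simp only [pb, Scheme.Hom.comp_appTop, CommRingCat.hom_comp, RingHom.comp_apply]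

lemma pb_mulVec {V W : Scheme.{u}} (f : W ⟶ V) (M : Matrix (Fin 2) (Fin 2) Γ(V, ⊤))
    (s : Fin 2 → Γ(V, ⊤)) : pb f (M.mulVec s) = (mp f M).mulVec (pb f s) := by
  ext i
  exact RingHom.map_mulVec f.appTop.hom M s i

lemma mp_mul_one {V W : Scheme.{u}} (f : W ⟶ V) (M N : Matrix (Fin 2) (Fin 2) Γ(V, ⊤))
    (h : N * M = 1) : mp f N * mp f M = 1 := by
  rw [mp, mp, ← Matrix.map_mul, h, Matrix.map_one _ (map_zero _) (map_one _)]

lemma isUnit_pb_basicOpen {V : Scheme.{u}} (w : Γ(V, ⊤)) :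
    IsUnit ((V.basicOpen w).ι.appTop.hom w) := by
  apply isUnit_of_forall
  intro x
  have := x.2
  have h2 := Scheme.preimage_basicOpen_top (V.basicOpen w).ι w
  rw [← h2]
  exact this

lemma mem_basicOpen_unimod {V : Scheme.{u}} (a w : Fin 2 → Γ(V, ⊤))
    (h : IsUnit (a 0 * w 0 + a 1 * w 1)) (x : V) : ∃ k, x ∈ V.basicOpen (w k) := by
  have hx : x ∈ V.basicOpen (a 0 * w 0 + a 1 * w 1) := by
    rw [Scheme.basicOpen_of_isUnit _ h]; trivial
  rw [Scheme.mem_basicOpen_top, map_add, map_mul, map_mul] at hx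
  rcases IsLocalRing.isUnit_or_isUnit_of_isUnit_add hx with h1 | h1
  · exact ⟨0, (Scheme.mem_basicOpen_top _ _ _).mpr (isUnit_of_mul_isUnit_right h1)⟩
  · exact ⟨1, (Scheme.mem_basicOpen_top _ _ _).mpr (isUnit_of_mul_isUnit_right h1)⟩

/-- A unimodular vector locally defines a point. -/
lemma unimod_local {V : Scheme.{u}} (a w : Fin 2 → Γ(V, ⊤))
    (h : IsUnit (a 0 * w 0 + a 1 * w 1)) (x : V) :
    ∃ U : V.Opens, x ∈ U ∧ ∃ n : (U : Scheme.{u}) ⟶ P1Z.{u}, Rep n (pb U.ι w) := by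
  obtain ⟨k, hk⟩ := mem_basicOpen_unimod a w h x
  refine ⟨_, hk, exists_rep _ ⟨k, isUnit_pb_basicOpen _⟩⟩

lemma rep_local_mv {V : Scheme.{u}} (m : V ⟶ P1Z.{u}) (M N : Matrix (Fin 2) (Fin 2) Γ(V, ⊤))
    (h : N * M = 1) (x : V) : ∃ (U : Scheme.{u}) (f : U ⟶ V), IsOpenImmersion f ∧
      x ∈ Set.range f ∧ ∃ s n, Rep (f ≫ m) s ∧ Rep n ((mp f M).mulVec s) := by
  obtain ⟨U, hxU, s, hs⟩ := rep_local m x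
  obtain ⟨i, hi⟩ := hs.exists_isUnit
  have h2 := mp_mul_one U.ι M N h
  have h3 : (mp U.ι N).mulVec ((mp U.ι M).mulVec s) = s := by
    rw [Matrix.mulVec_mulVec, h2, Matrix.one_mulVec]
  have h4 : s i = (mp U.ι N) i 0 * ((mp U.ι M).mulVec s) 0 +
    (mp U.ι N) i 1 * ((mp U.ι M).mulVec s) 1 := by
    conv_lhs => rw [← h3]
    rw [Matrix.mulVec, dotProduct, Fin.sum_univ_two]
  rw [h4] at hi
  obtain ⟨U', hxU', n, hn⟩ := unimod_local (fun j => (mp U.ι N) i j) _ hi ⟨x, hxU⟩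
  refine ⟨_, U'.ι ≫ U.ι, inferInstance, ⟨⟨⟨x, hxU⟩, hxU'⟩, rfl⟩, pb U'.ι s, n, ?_, ?_⟩
  · rw [Category.assoc]; exact hs.pb _
  · rw [mp_comp, ← pb_mulVec]; exact hn

lemma exists_act {V : Scheme.{u}} (m : V ⟶ P1Z.{u}) (M N : Matrix (Fin 2) (Fin 2) Γ(V, ⊤))
    (h : N * M = 1) : ∃ m' : V ⟶ P1Z.{u}, ∀ {W : Scheme.{u}} (f : W ⟶ V) (s) (n : W ⟶ P1Z.{u}),
      Rep (f ≫ m) s → Rep n ((mp f M).mulVec s) → f ≫ m' = n := by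
  obtain ⟨m', hm'⟩ := glue (X := V) (Z := P1Z.{u})
    (fun f n => ∃ s, Rep (f ≫ m) s ∧ Rep n ((mp f M).mulVec s)) (by
      rintro Y Y' g f n ⟨s, h1, h2⟩
      refine ⟨pb g s, ?_, ?_⟩
      · rw [Category.assoc]; exact h1.pb g
      · rw [mp_comp, ← pb_mulVec]; exact h2.pb g) (by
      rintro Y f n n' ⟨s, h1, h2⟩ ⟨s', h1', h2'⟩
      obtain ⟨c, hc, e⟩ := h1.inj h1'
      refine h2.unique h2' c hc fun k => ?_
      have : s' = c • s := by ext k; exact e k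
      rw [this, Matrix.mulVec_smul]; rfl) (by
      intro x
      obtain ⟨U, f, hf, hx, s, n, h1, h2⟩ := rep_local_mv m M N h x
      exact ⟨U, f, Fp.of_open f, hx, n, s, h1, h2⟩)
  exact ⟨m', fun f s n h1 h2 => hm' f n ⟨s, h1, h2⟩⟩

lemma exists_auto_aux {T : Scheme.{u}} (M N : Matrix (Fin 2) (Fin 2) Γ(T, ⊤))
    (h : N * M = 1) : ∃ γ : P1 T ⟶ P1 T, γ ≫ P1proj T = P1proj T ∧
      ∀ {V : Scheme.{u}} (t : V ⟶ T) (m n : V ⟶ P1Z.{u}) (s), Rep m s →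
        Rep n ((mp t M).mulVec s) → pt t m ≫ γ = pt t n := by
  obtain ⟨m', hm'⟩ := exists_act (P1snd T) (mp (P1proj T) M) (mp (P1proj T) N)
    (mp_mul_one _ _ _ h)
  refine ⟨pt (P1proj T) m', pt_proj _ _, fun t m n s h1 h2 => ?_⟩
  rw [comp_pt, pt_proj]
  congr 1
  refine hm' (pt t m) s n ?_ ?_
  · rwa [pt_snd]
  · rwa [← mp_comp, pt_proj]

lemma auto_inv_aux {T : Scheme.{u}} (M N : Matrix (Fin 2) (Fin 2) Γ(T, ⊤))
    (h : N * M = 1) (γ δ : P1 T ⟶ P1 T) (hγ : γ ≫ P1proj T = P1proj T)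
    (hδ : δ ≫ P1proj T = P1proj T)
    (Hγ : ∀ {V : Scheme.{u}} (t : V ⟶ T) (m n : V ⟶ P1Z.{u}) (s), Rep m s →
        Rep n ((mp t M).mulVec s) → pt t m ≫ γ = pt t n)
    (Hδ : ∀ {V : Scheme.{u}} (t : V ⟶ T) (m n : V ⟶ P1Z.{u}) (s), Rep m s →
        Rep n ((mp t N).mulVec s) → pt t m ≫ δ = pt t n) : γ ≫ δ = 𝟙 _ := by
  apply sep
  intro x
  obtain ⟨U, f, hf, hx, s, n, h1, h2⟩ := rep_local_mv (P1snd T) (mp (P1proj T) M)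
    (mp (P1proj T) N) (mp_mul_one _ _ _ h) x
  refine ⟨U, f, Fp.of_open f, hx, ?_⟩
  rw [← mp_comp] at h2
  rw [eq_pt f, ← Category.assoc, Hγ _ _ _ _ h1 h2, Hδ _ _ (f ≫ P1snd T) _ h2, Category.comp_id]
  rwa [Matrix.mulVec_mulVec, mp_mul_one _ _ _ h, Matrix.one_mulVec]

/-- Invertible matrices act on the projective line. -/
lemma exists_auto {T : Scheme.{u}} (M : Matrix (Fin 2) (Fin 2) Γ(T, ⊤))
    (h : IsUnit M.det) : ∃ γ : P1 T ⟶ P1 T, IsIso γ ∧ γ ≫ P1proj T = P1proj T ∧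
      ∀ {V : Scheme.{u}} (t : V ⟶ T) (m n : V ⟶ P1Z.{u}) (s), Rep m s →
        Rep n ((mp t M).mulVec s) → pt t m ≫ γ = pt t n := by
  have h1 := Matrix.mul_nonsing_inv M h
  have h2 := Matrix.nonsing_inv_mul M h
  obtain ⟨γ, a, b⟩ := exists_auto_aux M _ h2
  obtain ⟨δ, c, d⟩ := exists_auto_aux _ M h1
  refine ⟨γ, ⟨δ, auto_inv_aux M _ h2 γ δ a c b d, auto_inv_aux _ M h1 δ γ c a d b⟩, a, b⟩

end P1Aux

namespace P1Aux

lemma eq_zero_or_isUnit (K : Type u) [Field K] (z : Γ(Spec (CommRingCat.of K), ⊤)) :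
    z = 0 ∨ IsUnit z := by
  let e := (Scheme.ΓSpecIso (CommRingCat.of K)).commRingCatIsoToRingEquiv
  by_cases h : e z = 0
  · left
    exact (map_eq_zero_iff e e.injective).mp h
  · right
    exact (MulEquiv.isUnit_map e).mp (Ne.isUnit h)

/-- Nowhere equal. -/
def NE {T Z : Scheme.{u}} (σ τ : T ⟶ Z) : Prop :=
  ∀ (K : Type u) [Field K] (y : Spec (CommRingCat.of K) ⟶ T), y ≫ σ ≠ y ≫ τ

lemma NE.comp {T V Z : Scheme.{u}} {σ τ : T ⟶ Z} (h : NE σ τ) (f : V ⟶ T) :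
    NE (f ≫ σ) (f ≫ τ) := by
  intro K _ y
  rw [← Category.assoc, ← Category.assoc]
  exact h K (y ≫ f)

lemma isUnit_of_points {T : Scheme.{u}} (d : Γ(T, ⊤))
    (h : ∀ (K : Type u) [Field K] (y : Spec (CommRingCat.of K) ⟶ T), y.appTop.hom d ≠ 0) :
    IsUnit d := by
  apply isUnit_of_forall
  intro x
  have h1 := h (T.residueField x) (T.fromSpecResidueField x)
  have h2 := (eq_zero_or_isUnit _ _).resolve_left h1
  have h3 := Scheme.preimage_basicOpen_top (T.fromSpecResidueField x) d
  obtain ⟨z, hz⟩ : x ∈ Set.range (T.fromSpecResidueField x) := by simp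
  have h4 : z ∈ (T.fromSpecResidueField x) ⁻¹ᵁ (T.basicOpen d) := by
    rw [h3]
    exact (Scheme.basicOpen_of_isUnit _ h2).ge (Set.mem_univ z)
  rw [← hz]
  exact h4

/-- Two by two determinant. -/
def dt {B : Type*} [CommRing B] (v w : Fin 2 → B) : B := v 0 * w 1 - v 1 * w 0

lemma isUnit_dt {T : Scheme.{u}} {σ τ : T ⟶ P1Z.{u}} {v w} (hv : Rep σ v) (hw : Rep τ w)
    (h : NE σ τ) : IsUnit (dt v w) := by
  apply isUnit_of_points
  intro K _ y h0
  apply h K y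
  have hv' := hv.pb y
  have hw' := hw.pb y
  have h1 : dt (pb y v) (pb y w) = 0 := by
    rw [← h0]; simp [dt, pb]
  generalize pb y v = v' at *
  generalize pb y w = w' at *
  rw [dt] at h1
  obtain ⟨i, hi⟩ := hv'.exists_isUnit
  obtain ⟨a, ha⟩ := hi
  have haa : (↑a⁻¹ : Γ(Spec (CommRingCat.of K), ⊤)) * v' i = 1 := by rw [← ha]; simp
  have key : ∀ k, w' k = (w' i * ↑a⁻¹) * v' k := by
    intro k
    have h2 : w' k * v' i = w' i * v' k := by
      fin_cases i <;> fin_cases k <;> simp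
      · linear_combination h1
      · linear_combination -h1
    linear_combination (-(w' k)) * haa + ↑a⁻¹ * h2
  have hu : IsUnit (w' i * ↑a⁻¹) := by
    obtain ⟨k, hk⟩ := hw'.exists_isUnit
    rw [key] at hk
    exact isUnit_of_mul_isUnit_left hk
  exact hv'.unique hw' _ hu key

/-- Coordinates of the standard triple. -/
def stdv {B : Type*} [CommRing B] (i : Fin 3) : Fin 2 → B :=
  match i with
  | 0 => fun k => if k = 0 then 1 else 0
  | 1 => fun k => if k = 0 then 0 else 1
  | 2 => fun _ => 1

lemma exists_std (V : Scheme.{u}) (i : Fin 3) : ∃ m : V ⟶ P1Z.{u}, Rep m (stdv i) := by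
  apply exists_rep
  fin_cases i
  · exact ⟨0, by simp [stdv]⟩
  · exact ⟨1, by simp [stdv]⟩
  · exact ⟨0, by simp [stdv]⟩

/-- The standard triple. -/
noncomputable def std (V : Scheme.{u}) (i : Fin 3) : V ⟶ P1Z.{u} := (exists_std V i).choose

lemma rep_std (V : Scheme.{u}) (i : Fin 3) : Rep (std V i) (stdv i) := (exists_std V i).choose_spec

lemma comp_std {V W : Scheme.{u}} (f : W ⟶ V) (i : Fin 3) : f ≫ std V i = std W i := by
  refine ((rep_std V i).pb f).unique (rep_std W i) 1 isUnit_one fun k => ?_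
  fin_cases i <;> fin_cases k <;> simp [stdv, pb]

/-- Locally, every nowhere-equal triple is equivalent to the standard one. -/
lemma exists_standardize {T : Scheme.{u}} (σ : Fin 3 → (T ⟶ P1Z.{u}))
    (h01 : NE (σ 0) (σ 1)) (h02 : NE (σ 0) (σ 2)) (h21 : NE (σ 2) (σ 1)) (x : T) :
    ∃ (U : Scheme.{u}) (f : U ⟶ T), IsOpenImmersion f ∧ x ∈ Set.range f ∧
      ∃ γ : P1 U ⟶ P1 U, IsIso γ ∧ γ ≫ P1proj U = P1proj U ∧
        ∀ i, pt (𝟙 U) (std U i) ≫ γ = pt (𝟙 U) (f ≫ σ i) := by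
  obtain ⟨U0, hx0, v0, hv0⟩ := rep_local (σ 0) x
  obtain ⟨U1, hx1, v1, hv1⟩ := rep_local (σ 1) x
  obtain ⟨U2, hx2, v2, hv2⟩ := rep_local (σ 2) x
  let U : T.Opens := U0 ⊓ U1 ⊓ U2
  have l0 : U ≤ U0 := inf_le_left.trans inf_le_left
  have l1 : U ≤ U1 := inf_le_left.trans inf_le_right
  have l2 : U ≤ U2 := inf_le_right
  refine ⟨U, U.ι, inferInstance, by simp [U]; exact ⟨⟨hx0, hx1⟩, hx2⟩, ?_⟩
  have r0 := hv0.pb (T.homOfLE l0)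
  have r1 := hv1.pb (T.homOfLE l1)
  have r2 := hv2.pb (T.homOfLE l2)
  rw [← Category.assoc, Scheme.homOfLE_ι] at r0 r1 r2
  generalize pb (T.homOfLE l0) v0 = w0 at *
  generalize pb (T.homOfLE l1) v1 = w1 at *
  generalize pb (T.homOfLE l2) v2 = w2 at *
  have d01 := isUnit_dt r0 r1 (h01.comp _)
  have d02 := isUnit_dt r0 r2 (h02.comp _)
  have d21 := isUnit_dt r2 r1 (h21.comp _)
  let M : Matrix (Fin 2) (Fin 2) Γ(U, ⊤) := fun k j =>
    if j = 0 then dt w2 w1 * w0 k else dt w0 w2 * w1 k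
  have hM : IsUnit M.det := by
    have : M.det = dt w2 w1 * dt w0 w2 * dt w0 w1 := by
      rw [Matrix.det_fin_two]
      simp [M, dt]
      ring
    rw [this]
    exact (d21.mul d02).mul d01
  obtain ⟨γ, a, b, c⟩ := exists_auto M hM
  refine ⟨γ, a, b, fun i => c _ _ _ _ (rep_std _ i) ?_⟩
  have hid : mp (𝟙 (U : Scheme.{u})) M = M := by ext; simp [mp]
  rw [hid]
  fin_cases i
  · refine r0.smul _ d21 fun k => ?_
    simp [Matrix.mulVec, dotProduct, Fin.sum_univ_two, stdv, M]
  · refine r1.smul _ d02 fun k => ?_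
    simp [Matrix.mulVec, dotProduct, Fin.sum_univ_two, stdv, M]
  · refine r2.smul _ d01 fun k => ?_
    fin_cases k <;> simp [Matrix.mulVec, dotProduct, Fin.sum_univ_two, stdv, M, dt] <;> ring

end P1Aux

namespace P1Aux

/-- Base change of an endomorphism of the projective line. -/
noncomputable def bc {T T' : Scheme.{u}} (h : T' ⟶ T) (α : P1 T ⟶ P1 T) : P1 T' ⟶ P1 T' :=
  pt (P1proj T') (pt (P1proj T' ≫ h) (P1snd T') ≫ α ≫ P1snd T)

lemma bc_proj {T T' : Scheme.{u}} (h : T' ⟶ T) (α : P1 T ⟶ P1 T) :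
    bc h α ≫ P1proj T' = P1proj T' := pt_proj _ _

lemma pt_bc {T T' V : Scheme.{u}} (h : T' ⟶ T) (α : P1 T ⟶ P1 T) (t : V ⟶ T')
    (m : V ⟶ P1Z.{u}) :
    pt t m ≫ bc h α = pt t (pt (t ≫ h) m ≫ α ≫ P1snd T) := by
  rw [bc, comp_pt, pt_proj]
  congr 1
  rw [← Category.assoc, comp_pt, pt_proj_assoc, pt_snd]

lemma pt_comp_of_over {T V : Scheme.{u}} (α : P1 T ⟶ P1 T) (hα : α ≫ P1proj T = P1proj T)
    (t : V ⟶ T) (m : V ⟶ P1Z.{u}) : pt t m ≫ α = pt t (pt t m ≫ α ≫ P1snd T) := by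
  apply P1_ext
  · rw [Category.assoc, hα, pt_proj, pt_proj]
  · rw [pt_snd, Category.assoc]

lemma pt_ext {T Z : Scheme.{u}} (α β : P1 T ⟶ Z)
    (h : ∀ {V : Scheme.{u}} (t : V ⟶ T) (m : V ⟶ P1Z.{u}), pt t m ≫ α = pt t m ≫ β) : α = β := by
  have := h (P1proj T) (P1snd T)
  have e : pt (P1proj T) (P1snd T) = 𝟙 _ := by
    rw [eq_pt (𝟙 (P1 T)), Category.id_comp, Category.id_comp]
  rwa [e, Category.id_comp, Category.id_comp] at this

lemma bc_comp {T T' : Scheme.{u}} (h : T' ⟶ T) (α β : P1 T ⟶ P1 T)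
    (hα : α ≫ P1proj T = P1proj T) : bc h (α ≫ β) = bc h α ≫ bc h β := by
  apply pt_ext
  intro V t m
  rw [pt_bc, ← Category.assoc (pt t m), pt_bc, pt_bc]
  congr 1
  rw [← pt_comp_of_over α hα]
  simp only [Category.assoc]

lemma bc_id {T T' : Scheme.{u}} (h : T' ⟶ T) : bc h (𝟙 _) = 𝟙 _ := by
  apply pt_ext
  intro V t m
  rw [pt_bc, Category.id_comp, pt_snd, Category.comp_id]

lemma inv_over {T : Scheme.{u}} (α : P1 T ⟶ P1 T) (hα : α ≫ P1proj T = P1proj T) [IsIso α] :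
    inv α ≫ P1proj T = P1proj T := by
  rw [IsIso.inv_comp_eq, hα]

lemma bc_isIso {T T' : Scheme.{u}} (h : T' ⟶ T) (α : P1 T ⟶ P1 T)
    (hα : α ≫ P1proj T = P1proj T) [IsIso α] : IsIso (bc h α) := by
  refine ⟨bc h (inv α), ?_, ?_⟩
  · rw [← bc_comp h _ _ hα, IsIso.hom_inv_id, bc_id]
  · rw [← bc_comp h _ _ (inv_over α hα), IsIso.inv_hom_id, bc_id]

lemma exists_ch (i : Fin 2) (V : Scheme.{u}) (s : Γ(V, ⊤)) :
    ∃ m : V ⟶ P1Z.{u}, Rep m (fun k => if k = i then 1 else s) :=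
  exists_rep _ ⟨i, by simp⟩

/-- The charts of the projective line. -/
noncomputable def ch (i : Fin 2) (V : Scheme.{u}) (s : Γ(V, ⊤)) : V ⟶ P1Z.{u} :=
  (exists_ch i V s).choose

lemma rep_ch (i : Fin 2) (V : Scheme.{u}) (s : Γ(V, ⊤)) :
    Rep (ch i V s) (fun k => if k = i then 1 else s) := (exists_ch i V s).choose_spec

lemma Rep.eq_ch {i : Fin 2} {V : Scheme.{u}} {s : Γ(V, ⊤)} {m : V ⟶ P1Z.{u}}
    (h : Rep m (fun k => if k = i then 1 else s)) : m = ch i V s :=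
  h.unique (rep_ch i V s) 1 isUnit_one (by simp)

lemma comp_ch {V W : Scheme.{u}} (f : W ⟶ V) (i : Fin 2) (s : Γ(V, ⊤)) :
    f ≫ ch i V s = ch i W (f.appTop.hom s) := by
  apply Rep.eq_ch
  have h := (rep_ch i V s).pb f
  have e : pb f (fun k => if k = i then 1 else s) =
      fun k => if k = i then 1 else f.appTop.hom s := by
    ext k
    by_cases hk : k = i
    · simp only [pb, if_pos hk, map_one]
    · simp only [pb, if_neg hk]
  rwa [e] at h

lemma fin_two_ne {i j k : Fin 2} (h : i ≠ j) (h2 : k ≠ i) : k = j := by omega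

lemma ch_inj {V : Scheme.{u}} {i : Fin 2} {s s' : Γ(V, ⊤)} (h : ch i V s = ch i V s') :
    s = s' := by
  have h1 := rep_ch i V s
  rw [h] at h1
  obtain ⟨c, hc, e⟩ := h1.inj (rep_ch i V s')
  have e1 := e i
  have e2 := e (1 - i)
  have h3 : (1 - i) ≠ i := by omega
  simp [h3] at e1 e2
  rw [e2, ← e1, one_mul]

lemma ch_eq_ch {V : Scheme.{u}} {i j : Fin 2} (hij : i ≠ j) {s s' : Γ(V, ⊤)} :
    ch i V s = ch j V s' ↔ s * s' = 1 := by
  constructor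
  · intro h
    have h1 := rep_ch i V s
    rw [h] at h1
    obtain ⟨c, hc, e⟩ := h1.inj (rep_ch j V s')
    have e1 := e i
    have e2 := e j
    simp [hij, hij.symm] at e1 e2
    rw [e2, e1, mul_comm]
  · intro h
    refine (rep_ch i V s).unique (rep_ch j V s') s' (IsUnit.of_mul_eq_one s (by rwa [mul_comm]))
      fun k => ?_
    by_cases hk : k = i
    · subst hk
      simp [hij]
    · rw [fin_two_ne hij hk]
      simp [hij.symm]
      rw [← h, mul_comm]

lemma std0_eq (V : Scheme.{u}) : std V 0 = ch 0 V 0 := by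
  apply Rep.eq_ch
  exact rep_std V 0

lemma std1_eq (V : Scheme.{u}) : std V 1 = ch 1 V 0 := by
  apply Rep.eq_ch
  convert! rep_std V 1 using 1
  ext k
  fin_cases k <;> simp [stdv]

lemma std2_eq (V : Scheme.{u}) (i : Fin 2) : std V 2 = ch i V 1 := by
  apply Rep.eq_ch
  convert! rep_std V 2 using 1
  ext k
  simp [stdv]

lemma ne_ch {V : Scheme.{u}} {i j : Fin 2} (hij : i ≠ j) (s : Γ(V, ⊤)) :
    NE (ch i V s) (ch j V 0) := by
  intro K _ y
  rw [comp_ch, comp_ch, Ne, ch_eq_ch hij, map_zero, mul_zero]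
  intro h
  have e := congrArg (Scheme.ΓSpecIso (CommRingCat.of K)).hom.hom h
  rw [map_zero, map_one] at e
  exact zero_ne_one e

lemma Rep.exists_ch {V : Scheme.{u}} {m : V ⟶ P1Z.{u}} {v} (h : Rep m v) {i : Fin 2}
    (hi : IsUnit (v i)) : ∃ s, m = ch i V s := by
  obtain ⟨a, ha⟩ := hi
  refine ⟨↑a⁻¹ * v (1 - i), Rep.eq_ch (h.smul _ (Units.isUnit a⁻¹) fun k => ?_)⟩
  by_cases hk : k = i
  · subst hk
    rw [← ha]; simp
  · have : k = 1 - i := by omega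
    rw [if_neg hk, this]

lemma NE.exists_ch {V : Scheme.{u}} {i j : Fin 2} (hij : i ≠ j) {m : V ⟶ P1Z.{u}}
    (h : NE m (ch j V 0)) : ∃ s, m = ch i V s := by
  obtain ⟨v, hv, hr⟩ := exists_rep_of_mem m i (fun x => by
    obtain ⟨U, hx, v, hv⟩ := rep_local m x
    have h2 := h.comp U.ι
    rw [comp_ch, map_zero] at h2
    have hu := isUnit_dt hv (rep_ch _ _ _) h2
    have : IsUnit (v i) := by
      have hij' : (i = 0 ∧ j = 1) ∨ (i = 1 ∧ j = 0) := by omega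
      rcases hij' with ⟨rfl, rfl⟩ | ⟨rfl, rfl⟩
      · simpa [dt] using hu
      · simpa [dt] using hu
    exact (hv.isUnit_iff i).mp this ⟨x, hx⟩)
  exact hr.exists_ch (by rw [hv]; exact isUnit_one)

end P1Aux

namespace P1Aux

open LaurentPolynomial in
lemma poly_key {R : Type*} [CommRing R] (f g f' : Polynomial R) (f0 : f.coeff 0 = 0)
    (f1 : f.eval 1 = 1) (g0 : g.coeff 0 = 0) (f0' : f'.coeff 0 = 0)
    (hf : f'.comp f = Polynomial.X)
    (h : f.toLaurent * invert g.toLaurent = 1) : f = Polynomial.X ∧ g = Polynomial.X := by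
  obtain ⟨p, rfl⟩ := Polynomial.X_dvd_iff.mpr f0
  obtain ⟨q, rfl⟩ := Polynomial.X_dvd_iff.mpr g0
  obtain ⟨p', rfl⟩ := Polynomial.X_dvd_iff.mpr f0'
  have hu : p * p'.comp (Polynomial.X * p) = 1 := by
    rw [Polynomial.mul_comp, Polynomial.X_comp] at hf
    have : Polynomial.X * (p * p'.comp (Polynomial.X * p)) = Polynomial.X * 1 := by
      rw [mul_one, ← mul_assoc, hf]
    exact Polynomial.isRegular_X.left this
  generalize p'.comp (Polynomial.X * p) = w at hu
  have hT : (T 1 : R[T;T⁻¹]) * T (-1) = 1 := by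
    rw [← T_add]; simp
  have hq : p.toLaurent * invert q.toLaurent = 1 := by
    rw [map_mul, map_mul, map_mul, Polynomial.toLaurent_X, invert_T] at h
    linear_combination h - (Polynomial.toLaurent p * invert (Polynomial.toLaurent q)) * hT
  have hw : w.toLaurent = invert q.toLaurent := by
    have := congrArg Polynomial.toLaurent hu
    rw [map_mul, map_one] at this
    linear_combination (-Polynomial.toLaurent w) * hq + (invert (Polynomial.toLaurent q)) * this
  have hw0 : ∀ n : ℕ, n ≠ 0 → w.coeff n = 0 := by
    intro n hn
    have e := congrArg (fun z => z.coeff (n : ℤ)) hw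
    simp only [invert_apply, coeff_toLaurent] at e
    rw [Finsupp.mapDomain_of_notMem_range (a := -(n : ℤ))] at e
    · have e2 := Finsupp.mapDomain_apply (Nat.castEmbedding (R := ℤ)).injective
        w.toFinsupp.coeff n
      exact e2.symm.trans e
    · rintro ⟨k, hk⟩
      simp at hk
      omega
  have hwc : w = Polynomial.C (w.coeff 0) := by
    ext n
    by_cases hn : n = 0
    · subst hn; simp
    · rw [hw0 n hn, Polynomial.coeff_C, if_neg hn]
  rw [hwc] at hu
  have hpc : p = Polynomial.C (p.coeff 0) := by
    have hc : w.coeff 0 * p.coeff 0 = 1 := by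
      have := congrArg (fun z => z.coeff 0) hu
      simp at this
      rw [mul_comm]; exact this
    have h3 : Polynomial.C (w.coeff 0) * Polynomial.C (p.coeff 0) = 1 := by
      rw [← Polynomial.C_mul, hc, Polynomial.C_1]
    linear_combination Polynomial.C (p.coeff 0) * hu - p * h3
  have hp1 : p = 1 := by
    rw [hpc] at f1
    simp at f1
    rw [hpc, f1, Polynomial.C_1]
  refine ⟨by rw [hp1, mul_one], ?_⟩
  rw [hp1, map_one, one_mul] at hq
  have : q = 1 := by
    apply Polynomial.toLaurent_injective
    apply invert.injective
    rw [hq, map_one, map_one]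
  rw [this, mul_one]

/-- Charts over affine schemes. -/
noncomputable def cr (i : Fin 2) (B : CommRingCat.{u}) (s : B) : Spec B ⟶ P1Z.{u} :=
  ch i (Spec B) ((Scheme.ΓSpecIso B).inv.hom s)

lemma comp_cr (i : Fin 2) {A B : CommRingCat.{u}} (φ : A ⟶ B) (s : A) :
    Spec.map φ ≫ cr i A s = cr i B (φ.hom s) := by
  rw [cr, comp_ch, cr]
  congr 1
  have := congrArg (fun z => z.hom s) (Scheme.ΓSpecIso_inv_naturality φ)
  exact this.symm

lemma ΓSpecIso_inv_inj {B : CommRingCat.{u}} {s s' : B}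
    (h : (Scheme.ΓSpecIso B).inv.hom s = (Scheme.ΓSpecIso B).inv.hom s') : s = s' :=
  (Scheme.ΓSpecIso B).symm.commRingCatIsoToRingEquiv.injective h

lemma cr_inj {i : Fin 2} {B : CommRingCat.{u}} {s s' : B} (h : cr i B s = cr i B s') :
    s = s' := ΓSpecIso_inv_inj (ch_inj h)

lemma cr_eq_cr {i j : Fin 2} (hij : i ≠ j) {B : CommRingCat.{u}} {s s' : B} :
    cr i B s = cr j B s' ↔ s * s' = 1 := by
  rw [cr, cr, ch_eq_ch hij, ← map_mul]
  constructor
  · intro h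
    apply ΓSpecIso_inv_inj
    rw [h, map_one]
  · intro h
    rw [h, map_one]

lemma exists_cr {i : Fin 2} {B : CommRingCat.{u}} {m : Spec B ⟶ P1Z.{u}}
    (h : ∃ s, m = ch i (Spec B) s) : ∃ s, m = cr i B s := by
  obtain ⟨s, hs⟩ := h
  refine ⟨(Scheme.ΓSpecIso B).hom.hom s, ?_⟩
  rw [hs, cr]
  simp

lemma cr_zero (i : Fin 2) (B : CommRingCat.{u}) : cr i B 0 = ch i (Spec B) 0 := by
  rw [cr, map_zero]

lemma cr_one (i : Fin 2) (B : CommRingCat.{u}) : cr i B 1 = ch i (Spec B) 1 := by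
  rw [cr, map_one]

/-- `α` fixes the (constant) section `ch i s`. -/
lemma fix_pull {T V : Scheme.{u}} (α : P1 T ⟶ P1 T) (t : V ⟶ T) {σ τ : T ⟶ P1Z.{u}}
    (h : pt (𝟙 T) σ ≫ α = pt (𝟙 T) τ) : pt t (t ≫ σ) ≫ α = pt t (t ≫ τ) := by
  have := congrArg (fun z => t ≫ z) h
  simp only [← Category.assoc, comp_pt, Category.comp_id] at this
  exact this

lemma pt_inj {V T : Scheme.{u}} {t : V ⟶ T} {m m' : V ⟶ P1Z.{u}} (h : pt t m = pt t m') :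
    m = m' := by
  rw [← pt_snd t m, h, pt_snd]

lemma exists_poly {R : CommRingCat.{u}} (α : P1 (Spec R) ⟶ P1 (Spec R)) [Mono α]
    (hα : α ≫ P1proj _ = P1proj _) {i j : Fin 2} (hij : i ≠ j)
    (hfix : pt (𝟙 (Spec R)) (ch j _ 0) ≫ α = pt (𝟙 _) (ch j _ 0)) :
    ∃ f : Polynomial R, ∀ (B : CommRingCat.{u}) (φ : R ⟶ B) (s : B),
      pt (Spec.map φ) (cr i B s) ≫ α = pt (Spec.map φ) (cr i B (f.eval₂ φ.hom s)) := by
  let A : CommRingCat.{u} := CommRingCat.of (Polynomial R)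
  let c : R ⟶ A := CommRingCat.ofHom Polynomial.C
  let x : A := (Polynomial.X : Polynomial R)
  have hne : NE (pt (Spec.map c) (cr i A x) ≫ α ≫ P1snd _) (ch j (Spec A) 0) := by
    intro K _ y hy
    have h1 : pt (y ≫ Spec.map c) (y ≫ cr i A x) ≫ α =
        pt (y ≫ Spec.map c) (ch j _ 0) ≫ α := by
      have e1 := fix_pull α (y ≫ Spec.map c) hfix
      have e2 := pt_comp_of_over α hα (y ≫ Spec.map c) (y ≫ cr i A x)
      have e3 : pt (y ≫ Spec.map c) (y ≫ cr i A x) ≫ α ≫ P1snd _ =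
        y ≫ pt (Spec.map c) (cr i A x) ≫ α ≫ P1snd _ := by
        rw [← comp_pt, Category.assoc]
      rw [comp_ch, map_zero] at e1 hy
      rw [e2, e3, hy, e1]
    rw [cancel_mono] at h1
    have h2 := pt_inj h1
    refine ne_ch hij ((Scheme.ΓSpecIso A).inv.hom x) K y ?_
    rw [comp_ch y j, map_zero]
    exact h2
  obtain ⟨f, hf⟩ := exists_cr (hne.exists_ch hij)
  refine ⟨f, fun B φ s => ?_⟩
  let e : A ⟶ B := CommRingCat.ofHom (Polynomial.eval₂RingHom φ.hom s)
  have he : c ≫ e = φ := by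
    ext r
    simp [c, e, A]
  have hx : e.hom x = s := by simp [e, x, A]
  have h1 : pt (Spec.map φ) (cr i B s) = Spec.map e ≫ pt (Spec.map c) (cr i A x) := by
    rw [comp_pt, comp_cr, hx, ← Spec.map_comp, he]
  rw [h1, Category.assoc, pt_comp_of_over α hα, hf, comp_pt, comp_cr, ← Spec.map_comp, he]
  rfl

lemma auto_eq_id_affine {R : CommRingCat.{u}} (α : P1 (Spec R) ⟶ P1 (Spec R)) [IsIso α]
    (hα : α ≫ P1proj _ = P1proj _)
    (hfix : ∀ i, pt (𝟙 (Spec R)) (std _ i) ≫ α = pt (𝟙 _) (std _ i)) : α = 𝟙 _ := by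
  have fix0 := hfix 0
  have fix1 := hfix 1
  rw [std0_eq] at fix0
  rw [std1_eq] at fix1
  have fix2 := hfix 2
  rw [std2_eq _ 0] at fix2
  have fix0' : pt (𝟙 (Spec R)) (ch 0 _ 0) ≫ inv α = pt (𝟙 _) (ch 0 _ 0) := by
    rw [IsIso.comp_inv_eq, fix0]
  have fix1' : pt (𝟙 (Spec R)) (ch 1 _ 0) ≫ inv α = pt (𝟙 _) (ch 1 _ 0) := by
    rw [IsIso.comp_inv_eq, fix1]
  have h01 : (0 : Fin 2) ≠ 1 := by decide
  obtain ⟨f, hf⟩ := exists_poly α hα h01 fix1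
  obtain ⟨g, hg⟩ := exists_poly α hα h01.symm fix0
  obtain ⟨f', hf'⟩ := exists_poly (inv α) (inv_over α hα) h01 fix1'
  have zero_aux : ∀ (β : P1 (Spec R) ⟶ P1 (Spec R)) (i : Fin 2) (p : Polynomial R)
      (hp : ∀ (B : CommRingCat.{u}) (φ : R ⟶ B) (s : B),
        pt (Spec.map φ) (cr i B s) ≫ β = pt (Spec.map φ) (cr i B (p.eval₂ φ.hom s)))
      (h : pt (𝟙 (Spec R)) (ch i _ 0) ≫ β = pt (𝟙 _) (ch i _ 0)), p.coeff 0 = 0 := by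
    intro β i p hp h
    have e := hp R (𝟙 _) 0
    rw [Spec.map_id, cr_zero, h, ← cr_zero] at e
    have e2 := (cr_inj (pt_inj e)).symm
    rw [Polynomial.coeff_zero_eq_eval_zero]
    exact e2
  have f1 : f.eval 1 = 1 := by
    have e := hf R (𝟙 _) 1
    rw [Spec.map_id, cr_one, fix2, ← cr_one] at e
    exact (cr_inj (pt_inj e)).symm
  have hcomp : f'.comp f = Polynomial.X := by
    let A : CommRingCat.{u} := CommRingCat.of (Polynomial R)
    let c : R ⟶ A := CommRingCat.ofHom Polynomial.C
    let x : A := (Polynomial.X : Polynomial R)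
    have e1 := hf A c x
    have e2 := hf' A c (f.eval₂ c.hom x)
    rw [← e1, Category.assoc, IsIso.hom_inv_id, Category.comp_id] at e2
    have e3 := cr_inj (pt_inj e2)
    have e4 : f.eval₂ c.hom x = f := Polynomial.eval₂_C_X
    rw [e4] at e3
    exact e3.symm
  have hL : f.toLaurent * LaurentPolynomial.invert g.toLaurent = 1 := by
    let A : CommRingCat.{u} := CommRingCat.of (LaurentPolynomial R)
    let c : R ⟶ A := CommRingCat.ofHom (LaurentPolynomial.C (R := R))
    let x : A := (LaurentPolynomial.T 1 : LaurentPolynomial R)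
    let y : A := (LaurentPolynomial.T (-1) : LaurentPolynomial R)
    have hxy : x * y = 1 := by
      change (LaurentPolynomial.T 1 : LaurentPolynomial R) * LaurentPolynomial.T (-1) = 1
      rw [← LaurentPolynomial.T_add]; simp
    have e1 := hf A c x
    have e2 := hg A c y
    rw [(cr_eq_cr h01).mpr hxy, e2] at e1
    have e3 := (cr_eq_cr h01).mp (pt_inj e1).symm
    have e4 : f.eval₂ c.hom x = f.toLaurent := by
      have : (Polynomial.eval₂RingHom c.hom x) = (Polynomial.toLaurent (R := R)) := by
        apply Polynomial.ringHom_ext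
        · intro a; simp [c, A]
        · simp [x, A]
      exact congrArg (fun z => z f) this
    have e5 : g.eval₂ c.hom y = LaurentPolynomial.invert g.toLaurent := by
      have : (Polynomial.eval₂RingHom c.hom y) =
          (LaurentPolynomial.invert (R := R)).toAlgHom.toRingHom.comp
            (Polynomial.toLaurent (R := R)) := by
        apply Polynomial.ringHom_ext
        · intro a; simp [c, A]
        · simp [y, A]
      exact congrArg (fun z => z g) this
    rw [e4, e5] at e3
    exact e3
  obtain ⟨hfX, hgX⟩ := poly_key f g f' (zero_aux α 0 f hf fix0) f1 (zero_aux α 1 g hg fix1)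
    (zero_aux (inv α) 0 f' hf' fix0') hcomp hL
  subst hfX hgX
  simp only [Polynomial.eval₂_X] at hf hg
  apply sep
  intro x
  obtain ⟨U, hx, v, hv⟩ := rep_local (P1snd (Spec R)) x
  obtain ⟨i, hi⟩ := hv.exists_isUnit
  obtain ⟨s, hs⟩ := hv.exists_ch hi
  let 𝒰 := (U : Scheme.{u}).affineOpenCover
  let k := 𝒰.idx ⟨x, hx⟩
  obtain ⟨z, hz⟩ : (⟨x, hx⟩ : U) ∈ Set.range (𝒰.f k) := 𝒰.covers _
  have : IsOpenImmersion (𝒰.f k) := inferInstance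
  refine ⟨_, 𝒰.f k ≫ U.ι, Fp.of_open _, ⟨z, ?_⟩, ?_⟩
  · rw [Scheme.Hom.comp_apply, hz]; rfl
  have e := exists_cr (i := i) (m := (𝒰.f k ≫ U.ι) ≫ P1snd _) ⟨_, by
    rw [Category.assoc, hs, comp_ch]⟩
  obtain ⟨s', hs'⟩ := e
  rw [eq_pt (𝒰.f k ≫ U.ι), hs', ← Spec.map_preimage ((𝒰.f k ≫ U.ι) ≫ P1proj (Spec R)),
    Category.comp_id]
  fin_cases i
  · exact hf _ _ _
  · exact hg _ _ _

/-- An automorphism fixing the standard triple is the identity. -/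
lemma auto_eq_id {T : Scheme.{u}} (α : P1 T ⟶ P1 T) [IsIso α]
    (hα : α ≫ P1proj _ = P1proj _)
    (hfix : ∀ i, pt (𝟙 T) (std _ i) ≫ α = pt (𝟙 _) (std _ i)) : α = 𝟙 _ := by
  apply sep
  intro x
  let 𝒰 := T.affineOpenCover
  let k := 𝒰.idx (P1proj T x)
  have hk : P1proj T x ∈ Set.range (𝒰.f k) := 𝒰.covers _
  let h := 𝒰.f k
  have : IsIso (bc h α) := bc_isIso h α hα
  have hid : bc h α = 𝟙 _ := by
    apply auto_eq_id_affine _ (bc_proj _ _)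
    intro i
    rw [pt_bc, Category.id_comp]
    have := fix_pull α h (hfix i)
    rw [comp_std] at this
    rw [← Category.assoc, this, pt_snd]
  let U : (P1 T).Opens := (P1proj T) ⁻¹ᵁ (Scheme.Hom.opensRange h)
  have hr : Set.range (U.ι ≫ P1proj T) ⊆ Set.range h := by
    rintro _ ⟨y, rfl⟩
    exact y.2
  let t : (U : Scheme.{u}) ⟶ Spec (𝒰.X k) := IsOpenImmersion.lift h (U.ι ≫ P1proj T) hr
  have ht : t ≫ h = U.ι ≫ P1proj T := IsOpenImmersion.lift_fac _ _ _
  refine ⟨U, U.ι, Fp.of_open _, ⟨⟨x, hk⟩, rfl⟩, ?_⟩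
  have e := pt_bc h α t (U.ι ≫ P1snd T)
  rw [hid, Category.comp_id, ht, ← eq_pt] at e
  have e2 := pt_inj e
  apply P1_ext
  · rw [Category.assoc, hα, Category.comp_id]
  · rw [Category.comp_id, e2, Category.assoc]

end P1Aux

namespace P1Aux

lemma card_geom {D S : Scheme.{u}} (p : D ⟶ S) (hp : IsEtaleCoverOfDegree 3 p)
    (K : Type u) [Field K] [IsAlgClosed K] (x : Spec (CommRingCat.of K) ⟶ S) :
    Nat.card {q : Spec (CommRingCat.of K) ⟶ D // q ≫ p = x} = 3 := by
  obtain ⟨h1, h2, h3, h4⟩ := hp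
  have : IsLocallyArtinian (Spec (CommRingCat.of K)) := by
    rw [Scheme.isLocallyArtinianScheme_Spec]
    change IsArtinianRing K
    infer_instance
  have : IsLocallyArtinian (pullback p x) :=
    IsLocallyArtinian.of_locallyQuasiFinite (pullback.snd p x)
  have e1 : closedPoints (pullback p x : Scheme.{u}) = Set.univ := by
    ext y
    simp [closedPoints]
  rw [← h4 K x, ← Nat.card_univ (α := (pullback p x : Scheme.{u})), ← e1]
  refine Nat.card_congr (Equiv.trans ?_ (pointEquivClosedPoint (pullback.snd p x)))
  refine ⟨fun q => ⟨pullback.lift q.1 (𝟙 _) (by rw [q.2, Category.id_comp]), pullback.lift_snd _ _ _⟩,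
    fun q => ⟨q.1 ≫ pullback.fst p x, by
      rw [Category.assoc, pullback.condition, ← Category.assoc, q.2, Category.id_comp]⟩, ?_, ?_⟩
  · intro q
    exact Subtype.ext (pullback.lift_fst _ _ _)
  · rintro ⟨q, hq⟩
    ext : 1
    apply pullback.hom_ext
    · exact pullback.lift_fst _ _ _
    · exact (pullback.lift_snd _ _ _).trans hq.symm

lemma eqLoc {D S X : Scheme.{u}} (p : D ⟶ S) [IsFinite p] [Etale p] (f g : X ⟶ D)
    (h : f ≫ p = g ≫ p) : ∃ U : X.Opens, U.ι ≫ f = U.ι ≫ g ∧ IsClosed (U : Set X) ∧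
      ∀ (Y : Scheme.{u}) (y : Y ⟶ X), y ≫ f = y ≫ g → Set.range y ⊆ U := by
  let l : X ⟶ pullback p p := pullback.lift f g h
  let e : pullback (pullback.diagonal p) l ⟶ X := pullback.snd _ _
  have he : e ≫ f = e ≫ g := by
    have c := pullback.condition (f := pullback.diagonal p) (g := l)
    have c1 := congrArg (· ≫ pullback.fst p p) c
    have c2 := congrArg (· ≫ pullback.snd p p) c
    simp only [Category.assoc, l, pullback.lift_fst, pullback.lift_snd, pullback.diagonal_fst,
      pullback.diagonal_snd, Category.comp_id] at c1 c2
    exact c1.symm.trans c2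
  have o : IsOpenImmersion e := inferInstance
  have c : IsClosedImmersion e := inferInstance
  refine ⟨e.opensRange, ?_, ?_, ?_⟩
  · rw [← cancel_epi e.isoOpensRange.hom]
    simpa using he
  · simpa using e.isClosedEmbedding.isClosed_range
  · intro Y y hy
    have : y = pullback.lift (y ≫ f) y (by
        apply pullback.hom_ext
        · simp only [Category.assoc, l, pullback.lift_fst, pullback.diagonal_fst, Category.comp_id]
        · simp only [Category.assoc, l, pullback.lift_snd, pullback.diagonal_snd,
            Category.comp_id, hy]) ≫ e := (pullback.lift_snd _ _ _).symm
    rw [this]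
    rintro _ ⟨z, rfl⟩
    simp

/-- a splitting cover -/
structure Spl {D S T : Scheme.{u}} (p : D ⟶ S) (g : T ⟶ S) (t : Fin 3 → (T ⟶ D)) : Prop where
  comp : ∀ i, t i ≫ p = g
  ne : ∀ i j, i ≠ j → NE (t i) (t j)


lemma Spl.pull {D S T T' : Scheme.{u}} {p : D ⟶ S} {g : T ⟶ S} {t : Fin 3 → (T ⟶ D)}
    (h : Spl p g t) (f : T' ⟶ T) : Spl p (f ≫ g) (fun i => f ≫ t i) :=
  ⟨fun i => by rw [Category.assoc, h.comp], fun i j hij => (h.ne i j hij).comp f⟩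

lemma exists_geom {X : Scheme.{u}} (x : X) : ∃ (K : Type u) (_ : Field K) (_ : IsAlgClosed K)
    (y : Spec (CommRingCat.of K) ⟶ X), Set.range y = {x} := by
  let φ : X.residueField x ⟶ CommRingCat.of (AlgebraicClosure (X.residueField x)) :=
    CommRingCat.ofHom (algebraMap (X.residueField x) (AlgebraicClosure (X.residueField x)))
  have hr : Set.range (Spec.map φ ≫ X.fromSpecResidueField x) ⊆ {x} := by
    rintro _ ⟨w, rfl⟩
    rw [← X.range_fromSpecResidueField x]
    exact ⟨_, (Scheme.Hom.comp_apply _ _ _).symm⟩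
  refine ⟨AlgebraicClosure (X.residueField x), inferInstance, inferInstance,
    Spec.map φ ≫ X.fromSpecResidueField x, ?_⟩
  have : Nonempty (Spec (CommRingCat.of (AlgebraicClosure (X.residueField x)))) :=
    inferInstanceAs (Nonempty (PrimeSpectrum (AlgebraicClosure (X.residueField x))))
  refine (Set.Nonempty.subset_singleton_iff (Set.range_nonempty _)).mp hr

/-- every section over a split cover is locally one of the three -/
lemma Spl.cover {D S T W : Scheme.{u}} {p : D ⟶ S} (hp : IsEtaleCoverOfDegree 3 p) {g : T ⟶ S}
    {t : Fin 3 → (T ⟶ D)} (h : Spl p g t) (a : W ⟶ D) (b : W ⟶ T) (hab : a ≫ p = b ≫ g)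
    (w : W) : ∃ (U : Scheme.{u}) (f : U ⟶ W), IsOpenImmersion f ∧ w ∈ Set.range f ∧
      ∃ i, f ≫ a = f ≫ b ≫ t i := by
  have : IsFinite p := hp.1
  have : Etale p := hp.2.1
  obtain ⟨K, _, _, y, hy⟩ := exists_geom w
  have key : ∃ i, y ≫ a = y ≫ b ≫ t i := by
    let F : Fin 3 → {q : Spec (CommRingCat.of K) ⟶ D // q ≫ p = y ≫ a ≫ p} :=
      fun i => ⟨y ≫ b ≫ t i, by simp only [Category.assoc, h.comp, hab]⟩
    have hF : Function.Injective F := by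
      intro i j hij
      by_contra hne
      refine h.ne i j hne K (y ≫ b) ?_
      simpa [F] using hij
    have hc := card_geom p hp K (y ≫ a ≫ p)
    have : Finite {q : Spec (CommRingCat.of K) ⟶ D // q ≫ p = y ≫ a ≫ p} :=
      Nat.finite_of_card_ne_zero (by rw [hc]; norm_num)
    have hb := Function.Injective.bijective_of_nat_card_le hF (by rw [hc]; simp)
    obtain ⟨i, hi⟩ := hb.2 ⟨y ≫ a, by simp⟩
    exact ⟨i, (congrArg Subtype.val hi).symm⟩
  obtain ⟨i, hi⟩ := key
  obtain ⟨U, hU, -, hU'⟩ := eqLoc p a (b ≫ t i) (by rw [Category.assoc, h.comp, hab])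
  refine ⟨U, U.ι, inferInstance, ?_, i, hU⟩
  have : w ∈ U := hU' _ y hi (by rw [hy]; rfl)
  simpa using this

lemma exists_spl {D S : Scheme.{u}} (p : D ⟶ S) (hp : IsEtaleCoverOfDegree 3 p) :
    ∃ (T : Scheme.{u}) (g : T ⟶ S) (t : Fin 3 → (T ⟶ D)), Fp g ∧ Function.Surjective g ∧
      Spl p g t := by
  have : IsFinite p := hp.1
  have : Etale p := hp.2.1
  let X : Scheme.{u} := pullback (pullback.fst p p ≫ p) p
  let d0 : X ⟶ D := pullback.fst _ _ ≫ pullback.fst _ _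
  let d1 : X ⟶ D := pullback.fst _ _ ≫ pullback.snd _ _
  let d2 : X ⟶ D := pullback.snd _ _
  have h1 : d1 ≫ p = d0 ≫ p := by
    simp only [d1, d0, Category.assoc, pullback.condition]
  have h2 : d2 ≫ p = d0 ≫ p := by
    simp only [d2, d0, Category.assoc]
    rw [← pullback.condition]
  obtain ⟨U, hU, cU, rU⟩ := eqLoc p d0 d1 h1.symm
  obtain ⟨U', hU', cU', rU'⟩ := eqLoc p d0 d2 h2.symm
  obtain ⟨U'', hU'', cU'', rU''⟩ := eqLoc p d1 d2 (h1.trans h2.symm)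
  let V : X.Opens := ⟨(U : Set X)ᶜ ∩ ((U' : Set X)ᶜ ∩ (U'' : Set X)ᶜ),
    cU.isOpen_compl.inter (cU'.isOpen_compl.inter cU''.isOpen_compl)⟩
  have hmem : ∀ {Y : Scheme.{u}} (y : Y ⟶ V) (z : Y), (y ≫ V.ι) z ∈ V := by
    intro Y y z
    rw [Scheme.Hom.comp_apply]
    exact (y z).2
  have pt0 : ∀ (K : Type u) [Field K], Nonempty (Spec (CommRingCat.of K)) := fun K _ =>
    inferInstanceAs (Nonempty (PrimeSpectrum K))
  have n01 : NE (V.ι ≫ d0) (V.ι ≫ d1) := by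
    intro K _ y hy
    obtain ⟨z⟩ := pt0 K
    exact (hmem y z).1 (rU _ (y ≫ V.ι) (by simpa using hy) ⟨z, rfl⟩)
  have n02 : NE (V.ι ≫ d0) (V.ι ≫ d2) := by
    intro K _ y hy
    obtain ⟨z⟩ := pt0 K
    exact (hmem y z).2.1 (rU' _ (y ≫ V.ι) (by simpa using hy) ⟨z, rfl⟩)
  have n12 : NE (V.ι ≫ d1) (V.ι ≫ d2) := by
    intro K _ y hy
    obtain ⟨z⟩ := pt0 K
    exact (hmem y z).2.2 (rU'' _ (y ≫ V.ι) (by simpa using hy) ⟨z, rfl⟩)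
  have sy : ∀ {σ τ : (V : Scheme.{u}) ⟶ D}, NE σ τ → NE τ σ := fun h K _ y hy => h K y hy.symm
  have fe : Fp p := Fp.of_etale p
  refine ⟨V, V.ι ≫ d0 ≫ p, ![V.ι ≫ d0, V.ι ≫ d1, V.ι ≫ d2], ?_, ?_, ?_, ?_⟩
  · refine (Fp.of_open _).comp ?_
    refine Fp.comp ?_ fe
    exact Fp.of_etale _
  · intro s
    obtain ⟨K, _, _, y, hy⟩ := exists_geom s
    have hc := card_geom p hp K y
    obtain ⟨E⟩ : Nonempty ({q : Spec (CommRingCat.of K) ⟶ D // q ≫ p = y} ≃ Fin 3) :=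
      ⟨Nat.equivFinOfCardPos (by rw [hc]; norm_num) |>.trans (finCongr hc)⟩
    let q : Fin 3 → (Spec (CommRingCat.of K) ⟶ D) := fun i => (E.symm i).1
    have hq : ∀ i, q i ≫ p = y := fun i => (E.symm i).2
    have hqi : ∀ i j, i ≠ j → q i ≠ q j := fun i j hij h =>
      hij (E.symm.injective (Subtype.ext h))
    let l : Spec (CommRingCat.of K) ⟶ X := pullback.lift
      (pullback.lift (q 0) (q 1) ((hq 0).trans (hq 1).symm)) (q 2) (by
        rw [pullback.lift_fst_assoc, hq, hq])
    have l0 : l ≫ d0 = q 0 := by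
      simp only [l, d0, pullback.lift_fst_assoc, pullback.lift_fst]
    have l1 : l ≫ d1 = q 1 := by
      simp only [l, d1, pullback.lift_fst_assoc, pullback.lift_snd]
    have l2 : l ≫ d2 = q 2 := by
      simp only [l, d2, pullback.lift_snd]
    obtain ⟨z⟩ := pt0 K
    have aux : ∀ (a b : X ⟶ D) (W : X.Opens), W.ι ≫ a = W.ι ≫ b → l z ∈ W →
        l ≫ a = l ≫ b := by
      intro a b W h hz
      have hr : Set.range l ⊆ Set.range W.ι := by
        rintro _ ⟨z', rfl⟩
        have : z' = z := Subsingleton.elim (α := PrimeSpectrum K) _ _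
        rw [this]
        simpa using hz
      rw [← IsOpenImmersion.lift_fac W.ι l hr, Category.assoc, Category.assoc, h]
    have hz : l z ∈ V := by
      refine ⟨fun hh => ?_, fun hh => ?_, fun hh => ?_⟩
      · exact hqi 0 1 (by decide) (by rw [← l0, ← l1]; exact aux _ _ _ hU hh)
      · exact hqi 0 2 (by decide) (by rw [← l0, ← l2]; exact aux _ _ _ hU' hh)
      · exact hqi 1 2 (by decide) (by rw [← l1, ← l2]; exact aux _ _ _ hU'' hh)
    refine ⟨⟨l z, hz⟩, ?_⟩
    have e : (V.ι ≫ d0 ≫ p) ⟨l z, hz⟩ = (l ≫ d0 ≫ p) z := by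
      rw [Scheme.Hom.comp_apply, Scheme.Hom.comp_apply]
      rfl
    rw [e, ← Category.assoc, l0, hq]
    have : y z ∈ Set.range y := ⟨z, rfl⟩
    rw [hy] at this
    exact this
  · intro i
    fin_cases i <;> simp [h1, h2]
  · intro i j hij
    fin_cases i <;> fin_cases j <;> first | exact absurd rfl hij | skip
    · exact n01
    · exact n02
    · exact sy n01
    · exact n12
    · exact sy n02
    · exact sy n12

end P1Aux

namespace P1Aux

lemma loc_pull {X T U : Scheme.{u}} (b : X ⟶ T) (h : U ⟶ T) (hh : Fp h) (x : X)
    (hx : b x ∈ Set.range h) : ∃ (V : Scheme.{u}) (f : V ⟶ X) (c : V ⟶ U), Fp f ∧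
      x ∈ Set.range f ∧ f ≫ b = c ≫ h := by
  refine ⟨pullback h b, pullback.snd h b, pullback.fst h b, Fp.pullback_snd b hh, ?_,
    pullback.condition.symm⟩
  rw [Scheme.Pullback.range_snd]
  exact hx

lemma pt_of_bc {T T' V : Scheme.{u}} (h : T' ⟶ T) (α : P1 T ⟶ P1 T)
    (hα : α ≫ P1proj T = P1proj T) (c : V ⟶ T') {m m' : V ⟶ P1Z.{u}}
    (e : pt c m ≫ bc h α = pt c m') : pt (c ≫ h) m ≫ α = pt (c ≫ h) m' := by
  rw [pt_bc] at e
  rw [pt_comp_of_over α hα, pt_inj e]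

lemma bc_of_pt {T T' V : Scheme.{u}} (h : T' ⟶ T) (α : P1 T ⟶ P1 T)
    (c : V ⟶ T') {m m' : V ⟶ P1Z.{u}}
    (e : pt (c ≫ h) m ≫ α = pt (c ≫ h) m') : pt c m ≫ bc h α = pt c m' := by
  rw [pt_bc, ← Category.assoc, e, pt_snd]

lemma bc_local {T : Scheme.{u}} (α β : P1 T ⟶ P1 T) (hα : α ≫ P1proj T = P1proj T)
    (hβ : β ≫ P1proj T = P1proj T)
    (H : ∀ x : T, ∃ (U : Scheme.{u}) (h : U ⟶ T), Fp h ∧ x ∈ Set.range h ∧ bc h α = bc h β) :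
    α = β := by
  apply sep
  intro x
  obtain ⟨U, h, hh, hx, e⟩ := H (P1proj T x)
  obtain ⟨V, f, c, hf, hxf, hc⟩ := loc_pull (P1proj T) h hh x hx
  refine ⟨V, f, hf, hxf, ?_⟩
  rw [eq_pt f, hc]
  have e1 := pt_bc h α c (f ≫ P1snd T)
  have e2 := pt_bc h β c (f ≫ P1snd T)
  rw [e] at e1
  rw [pt_comp_of_over α hα, pt_comp_of_over β hβ, pt_inj (e1.symm.trans e2)]

/-- The data of an isomorphism carrying one embedding to the other. -/
structure Good {D S T : Scheme.{u}} (p : D ⟶ S) (e e' : D ⟶ P1Z.{u}) (g : T ⟶ S)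
    (α : P1 T ⟶ P1 T) : Prop where
  iso : IsIso α
  proj : α ≫ P1proj T = P1proj T
  map : ∀ (W : Scheme.{u}) (a : W ⟶ D) (b : W ⟶ T), a ≫ p = b ≫ g →
    pt b (a ≫ e) ≫ α = pt b (a ≫ e')

variable {D S T T' : Scheme.{u}} {p : D ⟶ S} {e e' : D ⟶ P1Z.{u}} {g : T ⟶ S}

lemma Good.bc {α : P1 T ⟶ P1 T} (hα : Good p e e' g α) (h : T' ⟶ T) :
    Good p e e' (h ≫ g) (bc h α) := by
  have := hα.iso
  refine ⟨bc_isIso h α hα.proj, bc_proj h α, fun W a b hab => ?_⟩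
  apply bc_of_pt
  exact hα.map W a (b ≫ h) (by rw [hab, Category.assoc])

lemma Good.inv {α : P1 T ⟶ P1 T} (hα : Good p e e' g α) :
    haveI := hα.iso
    Good p e' e g (inv α) := by
  have := hα.iso
  refine ⟨inferInstance, inv_over α hα.proj, fun W a b hab => ?_⟩
  rw [IsIso.comp_inv_eq, hα.map W a b hab]

/-- `γ` moves the standard points to the given ones. -/
structure StdBy (t : Fin 3 → (T ⟶ D)) (e : D ⟶ P1Z.{u}) (γ : P1 T ⟶ P1 T) : Prop where
  iso : IsIso γ
  proj : γ ≫ P1proj T = P1proj T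
  map : ∀ i, pt (𝟙 T) (std T i) ≫ γ = pt (𝟙 T) (t i ≫ e)

lemma StdBy.bc {t : Fin 3 → (T ⟶ D)} {γ : P1 T ⟶ P1 T} (hγ : StdBy t e γ) (h : T' ⟶ T) :
    StdBy (fun i => h ≫ t i) e (bc h γ) := by
  have := hγ.iso
  refine ⟨bc_isIso h γ hγ.proj, bc_proj h γ, fun i => ?_⟩
  apply bc_of_pt
  have := fix_pull γ h (hγ.map i)
  rw [comp_std] at this
  simpa using this

/-- `D` embeds in the projective line. -/
def Emb (p : D ⟶ S) (e : D ⟶ P1Z.{u}) : Prop :=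
  ∀ (Y : Scheme.{u}) (q q' : Y ⟶ D), q ≫ p = q' ≫ p → q ≫ e = q' ≫ e → q = q'

lemma Spl.exists_std {t : Fin 3 → (T ⟶ D)} (h : Spl p g t) (he : Emb p e) (x : T) :
    ∃ (U : Scheme.{u}) (f : U ⟶ T), IsOpenImmersion f ∧ x ∈ Set.range f ∧
      ∃ γ : P1 U ⟶ P1 U, StdBy (fun i => f ≫ t i) e γ := by
  have hne : ∀ i j, i ≠ j → NE (t i ≫ e) (t j ≫ e) := by
    intro i j hij K _ y hy
    refine h.ne i j hij K y (he _ _ _ ?_ ?_)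
    · rw [Category.assoc, Category.assoc, h.comp, h.comp]
    · rw [Category.assoc, Category.assoc, hy]
  obtain ⟨U, f, hf, hx, γ, h1, h2, h3⟩ := exists_standardize (fun i => t i ≫ e)
    (hne 0 1 (by decide)) (hne 0 2 (by decide)) (hne 2 1 (by decide)) x
  exact ⟨U, f, hf, hx, γ, h1, h2, fun i => by rw [h3, Category.assoc]⟩

lemma split_local (hp : IsEtaleCoverOfDegree 3 p) (he : Emb p e) (he' : Emb p e') (g : T ⟶ S)
    (x : T) : ∃ (U : Scheme.{u}) (h : U ⟶ T), Fp h ∧ x ∈ Set.range h ∧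
      ∃ t, Spl p (h ≫ g) t ∧ (∃ γ, StdBy t e γ) ∧ ∃ γ', StdBy t e' γ' := by
  obtain ⟨T0, G, t, hG, hGs, ht⟩ := exists_spl p hp
  obtain ⟨T1, h, c, hh, ⟨x1, hx1⟩, hc⟩ := loc_pull g G hG x (hGs _)
  have ht1 := ht.pull c
  obtain ⟨U2, f2, hf2, ⟨x2, hx2⟩, γ, hγ⟩ := ht1.exists_std he x1
  have ht2 := ht1.pull f2
  obtain ⟨U3, f3, hf3, ⟨x3, hx3⟩, γ', hγ'⟩ := ht2.exists_std he' x2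
  refine ⟨U3, f3 ≫ f2 ≫ h, (Fp.of_open f3).comp ((Fp.of_open f2).comp hh), ⟨x3, ?_⟩,
    _, ?_, ⟨_, hγ.bc f3⟩, ⟨γ', hγ'⟩⟩
  · rw [Scheme.Hom.comp_apply, Scheme.Hom.comp_apply, hx3, hx2, hx1]
  · have := ht2.pull f3
    rw [← hc] at this
    simpa only [Category.assoc] using this

lemma Good.unique_split {t : Fin 3 → (T ⟶ D)} (h : Spl p g t) {γ : P1 T ⟶ P1 T}
    (hγ : StdBy t e γ) {α β : P1 T ⟶ P1 T} (hα : Good p e e' g α) (hβ : Good p e e' g β) :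
    α = β := by
  have := hα.iso
  have := hβ.iso
  have := hγ.iso
  have key : γ ≫ α ≫ CategoryTheory.inv β ≫ CategoryTheory.inv γ = 𝟙 _ := by
    apply auto_eq_id
    · simp only [Category.assoc, inv_over γ hγ.proj, inv_over β hβ.proj, hα.proj, hγ.proj]
    · intro i
      have e1 := hα.map T (t i) (𝟙 T) (by rw [h.comp, Category.id_comp])
      have e2 := hβ.map T (t i) (𝟙 T) (by rw [h.comp, Category.id_comp])
      rw [← Category.assoc, hγ.map, ← Category.assoc, e1, ← e2, Category.assoc,
        IsIso.hom_inv_id_assoc, ← hγ.map, Category.assoc, IsIso.hom_inv_id, Category.comp_id]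
  have k2 : γ ≫ α = γ ≫ β := by
    rw [← Category.assoc, ← Category.assoc, IsIso.comp_inv_eq, Category.id_comp,
      IsIso.comp_inv_eq] at key
    exact key
  rwa [cancel_epi] at k2

lemma Good.unique (hp : IsEtaleCoverOfDegree 3 p) (he : Emb p e)
    {α β : P1 T ⟶ P1 T} (hα : Good p e e' g α) (hβ : Good p e e' g β) : α = β := by
  apply bc_local α β hα.proj hβ.proj
  intro x
  obtain ⟨U, h, hh, hx, t, ht, ⟨γ, hγ⟩, -⟩ := split_local hp he he g x
  exact ⟨U, h, hh, hx, Good.unique_split ht hγ (hα.bc h) (hβ.bc h)⟩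

lemma Good.exists_split (hp : IsEtaleCoverOfDegree 3 p) {t : Fin 3 → (T ⟶ D)} (h : Spl p g t)
    {γ γ' : P1 T ⟶ P1 T} (hγ : StdBy t e γ) (hγ' : StdBy t e' γ') :
    ∃ α, Good p e e' g α := by
  have := hγ.iso
  have := hγ'.iso
  refine ⟨CategoryTheory.inv γ ≫ γ', inferInstance, ?_, fun W a b hab => ?_⟩
  · rw [Category.assoc, hγ'.proj, inv_over γ hγ.proj]
  · apply sep
    intro w
    obtain ⟨U, f, hf, hw, i, hi⟩ := h.cover hp a b hab w
    refine ⟨U, f, Fp.of_open f, hw, ?_⟩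
    have e1 := fix_pull γ (f ≫ b) (hγ.map i)
    have e2 := fix_pull γ' (f ≫ b) (hγ'.map i)
    rw [← Category.assoc, comp_pt, comp_pt, ← Category.assoc f a, ← Category.assoc f a, hi]
    simp only [Category.assoc] at e1 e2 ⊢
    rw [← e1, Category.assoc, IsIso.hom_inv_id_assoc, e2]

lemma Good.exists_local (hp : IsEtaleCoverOfDegree 3 p) (he : Emb p e) (he' : Emb p e') (x : S) :
    ∃ (U : Scheme.{u}) (h : U ⟶ S), Fp h ∧ x ∈ Set.range h ∧ ∃ α, Good p e e' h α := by
  obtain ⟨U, h, hh, hx, t, ht, ⟨γ, hγ⟩, ⟨γ', hγ'⟩⟩ := split_local hp he he' (𝟙 S) x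
  rw [Category.comp_id] at ht
  exact ⟨U, h, hh, hx, Good.exists_split hp ht hγ hγ'⟩

lemma Good.descend (hp : IsEtaleCoverOfDegree 3 p) (he : Emb p e) (he' : Emb p e') :
    ∃ A : P1 S ⟶ P1 S, A ≫ P1proj S = P1proj S ∧
      ∀ (U : Scheme.{u}) (h : U ⟶ S) (α : P1 U ⟶ P1 U), Good p e e' h α → P1Aux.bc h A = α := by
  have hglue := glue (X := P1 S) (Z := P1Z.{u})
    (fun {Y} f n => ∃ α, Good p e e' (f ≫ P1proj S) α ∧
      n = pt (𝟙 Y) (f ≫ P1snd S) ≫ α ≫ P1snd Y)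
  have fin : ∀ m : P1 S ⟶ P1Z.{u}, (∀ {Y : Scheme.{u}} (f : Y ⟶ P1 S) (n : Y ⟶ P1Z.{u}),
      (∃ α, Good p e e' (f ≫ P1proj S) α ∧
        n = pt (𝟙 Y) (f ≫ P1snd S) ≫ α ≫ P1snd Y) → f ≫ m = n) →
      ∃ A : P1 S ⟶ P1 S, A ≫ P1proj S = P1proj S ∧
      ∀ (U : Scheme.{u}) (h : U ⟶ S) (α : P1 U ⟶ P1 U), Good p e e' h α →
        P1Aux.bc h A = α := by
    intro m hm
    refine ⟨pt (P1proj S) m, pt_proj _ _, fun U h α hα => ?_⟩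
    have e1 := hm (pt (P1proj U ≫ h) (P1snd U)) _ ⟨P1Aux.bc (P1proj U) α, by
      rw [pt_proj]; exact hα.bc _, rfl⟩
    rw [P1Aux.bc, pt_snd, e1, pt_snd, ← Category.assoc (pt _ _), pt_bc, pt_snd, Category.id_comp]
    have e2 := eq_pt (𝟙 (P1 U))
    rw [Category.id_comp, Category.id_comp] at e2
    rw [← e2, Category.id_comp]
    have e3 := eq_pt α
    rw [hα.proj] at e3
    exact e3.symm
  refine Exists.elim (hglue ?_ ?_ ?_) fin
  · rintro Y Y' g f m ⟨α, hα, rfl⟩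
    refine ⟨P1Aux.bc g α, by rw [Category.assoc]; exact hα.bc g, ?_⟩
    have e1 := pt_bc g α (𝟙 Y') ((g ≫ f) ≫ P1snd S)
    have e2 := congrArg (fun z => z ≫ P1snd Y') e1
    simp only [pt_snd, Category.assoc, Category.id_comp] at e2
    rw [Category.assoc, e2, ← Category.assoc g, comp_pt, Category.comp_id]
  · rintro Y f m m' ⟨α, hα, rfl⟩ ⟨β, hβ, rfl⟩
    rw [Good.unique hp he hα hβ]
  · intro x
    obtain ⟨U, h, hh, hx, α, hα⟩ := Good.exists_local hp he he' (P1proj S x)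
    obtain ⟨V, f, c, hf, hxf, hc⟩ := loc_pull (P1proj S) h hh x hx
    exact ⟨V, f, hf, hxf, _, P1Aux.bc c α, by rw [hc]; exact hα.bc c, rfl⟩

lemma Good.exists (hp : IsEtaleCoverOfDegree 3 p) (he : Emb p e) (he' : Emb p e') :
    ∃ A, Good p e e' (𝟙 S) A := by
  obtain ⟨A, hA, hA'⟩ := Good.descend hp he he'
  obtain ⟨B, hB, hB'⟩ := Good.descend hp he' he
  refine ⟨A, ⟨B, ?_, ?_⟩, hA, ?_⟩
  · apply bc_local _ _ (by rw [Category.assoc, hB, hA]) (Category.id_comp _)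
    intro x
    obtain ⟨U, h, hh, hx, α, hα⟩ := Good.exists_local hp he he' x
    have := hα.iso
    refine ⟨U, h, hh, hx, ?_⟩
    rw [bc_comp h _ _ hA, bc_id, hA' U h α hα, hB' U h _ hα.inv, IsIso.hom_inv_id]
  · apply bc_local _ _ (by rw [Category.assoc, hA, hB]) (Category.id_comp _)
    intro x
    obtain ⟨U, h, hh, hx, α, hα⟩ := Good.exists_local hp he he' x
    have := hα.iso
    refine ⟨U, h, hh, hx, ?_⟩
    rw [bc_comp h _ _ hB, bc_id, hA' U h α hα, hB' U h _ hα.inv, IsIso.inv_hom_id]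
  · intro W a b hab
    rw [Category.comp_id] at hab
    apply sep
    intro w
    obtain ⟨U, h, hh, hx, α, hα⟩ := Good.exists_local hp he he' (b w)
    obtain ⟨V, f, c, hf, hxf, hc⟩ := loc_pull b h hh w hx
    refine ⟨V, f, hf, hxf, ?_⟩
    rw [← Category.assoc, comp_pt, comp_pt, hc]
    apply pt_of_bc h A hA
    rw [hA' U h α hα]
    have := hα.map V (f ≫ a) c (by rw [Category.assoc, hab, hc])
    simpa only [Category.assoc] using this

end P1Aux

open P1Aux in
/-- Let `S` be a scheme and `D, D′` closed subschemes of `ℙ¹_S` such that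
`D → S` and `D′ → S` are étale covers of degree 3, and let `η : D → D′` be an
`S`-isomorphism. Then there is a unique `S`-automorphism `α` of `ℙ¹_S` whose restriction
to `D` equals `η`, i.e. `α ∘ ι_D = ι_{D′} ∘ η`. -/
theorem stmt5 (S D D' : Scheme.{u}) (ι : D ⟶ P1 S) (ι' : D' ⟶ P1 S)
    (hι : IsClosedImmersion ι) (hι' : IsClosedImmersion ι')
    (hD : IsEtaleCoverOfDegree 3 (ι ≫ P1proj S))
    (hD' : IsEtaleCoverOfDegree 3 (ι' ≫ P1proj S))
    (η : D ⟶ D') (hη : IsIso η) (hηS : η ≫ ι' ≫ P1proj S = ι ≫ P1proj S) :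
    ∃! α : P1 S ⟶ P1 S, IsIso α ∧ α ≫ P1proj S = P1proj S ∧ ι ≫ α = η ≫ ι' := by
  have he : Emb (ι ≫ P1proj S) (ι ≫ P1snd S) := by
    intro Y q q' h1 h2
    rw [← cancel_mono ι]
    apply P1_ext <;> simpa only [Category.assoc]
  have he' : Emb (ι ≫ P1proj S) (η ≫ ι' ≫ P1snd S) := by
    intro Y q q' h1 h2
    rw [← cancel_mono η, ← cancel_mono ι']
    rw [← hηS] at h1
    apply P1_ext <;> simpa only [Category.assoc]
  have eι : ι = pt (ι ≫ P1proj S) (ι ≫ P1snd S) := eq_pt ι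
  have eι' : η ≫ ι' = pt (ι ≫ P1proj S) (η ≫ ι' ≫ P1snd S) := by
    have := eq_pt (η ≫ ι')
    rwa [Category.assoc, Category.assoc, hηS] at this
  obtain ⟨A, hA⟩ := Good.exists hD he he'
  refine ⟨A, ⟨hA.iso, hA.proj, ?_⟩, ?_⟩
  · have := hA.map D (𝟙 D) (ι ≫ P1proj S) (by rw [Category.id_comp, Category.comp_id])
    rw [Category.id_comp, Category.id_comp, ← eι, ← eι'] at this
    exact this
  · rintro B ⟨h1, h2, h3⟩
    refine Good.unique hD he (g := 𝟙 S) ⟨h1, h2, fun W a b hab => ?_⟩ hA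
    rw [Category.comp_id] at hab
    rw [← hab, ← comp_pt a, ← comp_pt a, ← eι, ← eι', Category.assoc, h3]
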